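/- Let q be a power of an odd prime p. The Borel subgroup B of SU_3(q) has exactly one rational irreducible complex character ϑ of degree q²−q whose Frobenius–Schur indicator is +1; this ϑ is the character of a representation over ℚ, and its orthogonal discriminant is (−1)^{(q−1)/2}·q. -/

import Mathlib

open Matrix

noncomputable section

namespace Paper

/-- The character of a matrix representation. -/
def charOf {G : Type} [Group G] {n : ℕ} (ρ : G →* GL (Fin n) ℂ) : G → ℂ :=
  fun g => Matrix.trace ((ρ g : Matrix (Fin n) (Fin n) ℂ))

/-- Irreducibility of a complex matrix representation. -/
def IsIrredRep {G : Type} [Group G] {n : ℕ} (ρ : G →* GL (Fin n) ℂ) : Prop :=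
  0 < n ∧ ∀ W : Submodule ℂ (Fin n → ℂ),
    (∀ (g : G), ∀ v ∈ W, (ρ g : Matrix (Fin n) (Fin n) ℂ).mulVec v ∈ W) → W = ⊥ ∨ W = ⊤

/-- `χ` is an irreducible complex character of `G`. -/
def IsIrrChar {G : Type} [Group G] (χ : G → ℂ) : Prop :=
  ∃ (n : ℕ) (ρ : G →* GL (Fin n) ℂ), IsIrredRep ρ ∧ χ = charOf ρ

/-- The character field `ℚ(χ)`, as a subfield of `ℂ`. -/
def charField {G : Type} [Group G] (χ : G → ℂ) : Subfield ℂ :=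
  Subfield.closure (Set.range χ)

/-- The subfield of real numbers inside `ℂ`. -/
def realsIn : Subfield ℂ := Subfield.closure (Set.range ((↑) : ℝ → ℂ))

/-- The character field of `χ` is not contained in `ℝ`. -/
def NotReal {G : Type} [Group G] (χ : G → ℂ) : Prop := ¬ charField χ ≤ realsIn

/-- `χ` has unitary discriminant `d`. -/
def HasUnitaryDisc {G : Type} [Group G] (χ : G → ℂ) (d : ℂ) : Prop :=
  ∀ (n : ℕ) (ρ : G →* GL (Fin n) ℂ),
    χ = charOf ρ →
    (∀ g i j, ((ρ g : Matrix (Fin n) (Fin n) ℂ)) i j ∈ charField χ) →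
    ∀ H : Matrix (Fin n) (Fin n) ℂ,
      (∀ i j, H i j ∈ charField χ) →
      IsUnit H.det →
      H.conjTranspose = H →
      (∀ g, ((ρ g : Matrix (Fin n) (Fin n) ℂ)).conjTranspose * H *
        (ρ g : Matrix (Fin n) (Fin n) ℂ) = H) →
      ∃ z ∈ charField χ, z ≠ 0 ∧
        (-1 : ℂ) ^ (n * (n - 1) / 2) * H.det = d * (z * (starRingEnd ℂ) z)

/-- `χ` has orthogonal discriminant `d`. -/
def HasOrthDisc {G : Type} [Group G] (χ : G → ℂ) (d : ℂ) : Prop :=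
  ∀ (n : ℕ) (ρ : G →* GL (Fin n) ℂ),
    χ = charOf ρ →
    (∀ g i j, ((ρ g : Matrix (Fin n) (Fin n) ℂ)) i j ∈ charField χ) →
    ∀ H : Matrix (Fin n) (Fin n) ℂ,
      (∀ i j, H i j ∈ charField χ) →
      IsUnit H.det →
      H.transpose = H →
      (∀ g, ((ρ g : Matrix (Fin n) (Fin n) ℂ)).transpose * H *
        (ρ g : Matrix (Fin n) (Fin n) ℂ) = H) →
      ∃ z ∈ charField χ, z ≠ 0 ∧
        (-1 : ℂ) ^ (n * (n - 1) / 2) * H.det = d * z ^ 2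

/-- `χ` is a rational character. -/
def IsRationalChar {G : Type} [Group G] (χ : G → ℂ) : Prop :=
  ∀ g, ∃ r : ℚ, χ g = (r : ℂ)

/-- `χ` is the character of a representation over `ℚ`. -/
def RealizableOverQ {G : Type} [Group G] (χ : G → ℂ) : Prop :=
  ∃ (n : ℕ) (ρ : G →* GL (Fin n) ℂ), χ = charOf ρ ∧
    ∀ g i j, ∃ r : ℚ, ((ρ g : Matrix (Fin n) (Fin n) ℂ)) i j = (r : ℂ)

end Paper

namespace Paper

variable (p k : ℕ) (F : Type) [Field F] [Fintype F] [ExpChar F p]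

/-- The Gram matrix `Ω` (anti-diagonal ones). -/
def Om : Matrix (Fin 3) (Fin 3) F :=
  Matrix.of fun i j => if (i : ℕ) + (j : ℕ) = 2 then 1 else 0

/-- Entrywise `q`-power Frobenius `Φ` on `3×3` matrices, where `q = p^k`. -/
def Phi : Matrix (Fin 3) (Fin 3) F →+* Matrix (Fin 3) (Fin 3) F :=
  (iterateFrobenius F p k).mapMatrix

/-- The special unitary group `SU₃(q) = {g ∈ SL₃(F_{q²}) : Φ(g)ᵀ·Ω·g = Ω}`. -/
def SU3 : Subgroup (Matrix.SpecialLinearGroup (Fin 3) F) where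
  carrier := {g | (Phi p k F g.val)ᵀ * Om F * g.val = Om F}
  one_mem' := by
    show (Phi p k F (1 : Matrix.SpecialLinearGroup (Fin 3) F).val)ᵀ * Om F *
        (1 : Matrix.SpecialLinearGroup (Fin 3) F).val = Om F
    simp
  mul_mem' := by
    intro a b ha hb
    show (Phi p k F (a.val * b.val))ᵀ * Om F * (a.val * b.val) = Om F
    have ha' : (Phi p k F a.val)ᵀ * Om F * a.val = Om F := ha
    have hb' : (Phi p k F b.val)ᵀ * Om F * b.val = Om F := hb
    calc (Phi p k F (a.val * b.val))ᵀ * Om F * (a.val * b.val)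
        = (Phi p k F b.val)ᵀ * ((Phi p k F a.val)ᵀ * Om F * a.val) * b.val := by
          rw [_root_.map_mul, Matrix.transpose_mul]; simp only [Matrix.mul_assoc]
      _ = (Phi p k F b.val)ᵀ * Om F * b.val := by rw [ha']
      _ = Om F := hb'
  inv_mem' := by
    intro a ha
    show (Phi p k F (a⁻¹).val)ᵀ * Om F * (a⁻¹).val = Om F
    have ha' : (Phi p k F a.val)ᵀ * Om F * a.val = Om F := ha
    have h1 : a.val * (a⁻¹).val = 1 := by
      rw [← Matrix.SpecialLinearGroup.coe_mul, mul_inv_cancel,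
        Matrix.SpecialLinearGroup.coe_one]
    nth_rewrite 1 [← ha']
    calc (Phi p k F (a⁻¹).val)ᵀ * ((Phi p k F a.val)ᵀ * Om F * a.val) * (a⁻¹).val
        = (Phi p k F a.val * Phi p k F (a⁻¹).val)ᵀ * Om F * (a.val * (a⁻¹).val) := by
          rw [Matrix.transpose_mul]; simp only [Matrix.mul_assoc]
      _ = Om F := by rw [← _root_.map_mul, h1, _root_.map_one, Matrix.transpose_one,
            Matrix.one_mul, Matrix.mul_one]

end Paper

namespace Paper

variable (p k : ℕ) (F : Type) [Field F] [Fintype F] [ExpChar F p]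

/-- The Borel subgroup of `SU₃(q)`: the upper triangular matrices in `SU₃(q)`. -/
def Borel : Subgroup ↥(SU3 p k F) where
  carrier := {g | Matrix.BlockTriangular ((g : Matrix.SpecialLinearGroup (Fin 3) F) :
    Matrix (Fin 3) (Fin 3) F) id}
  one_mem' := by
    show Matrix.BlockTriangular ((1 : Matrix.SpecialLinearGroup (Fin 3) F) :
      Matrix (Fin 3) (Fin 3) F) id
    rw [Matrix.SpecialLinearGroup.coe_one]
    exact Matrix.blockTriangular_one
  mul_mem' := by
    intro a b ha hb
    exact Matrix.BlockTriangular.mul ha hb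
  inv_mem' := by
    intro a ha
    show Matrix.BlockTriangular (((a⁻¹ : ↥(SU3 p k F)) : Matrix.SpecialLinearGroup (Fin 3) F) :
      Matrix (Fin 3) (Fin 3) F) id
    have hcoe : (((a⁻¹ : ↥(SU3 p k F)) : Matrix.SpecialLinearGroup (Fin 3) F) :
        Matrix (Fin 3) (Fin 3) F)
        = (((a : ↥(SU3 p k F)) : Matrix.SpecialLinearGroup (Fin 3) F) :
          Matrix (Fin 3) (Fin 3) F)⁻¹ := by
      rw [show ((a⁻¹ : ↥(SU3 p k F)) : Matrix.SpecialLinearGroup (Fin 3) F)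
        = ((a : ↥(SU3 p k F)) : Matrix.SpecialLinearGroup (Fin 3) F)⁻¹ from rfl]
      rw [Matrix.SpecialLinearGroup.coe_inv, Matrix.inv_def,
        ((a : ↥(SU3 p k F)) : Matrix.SpecialLinearGroup (Fin 3) F).2]
      simp
    rw [hcoe]
    haveI : Invertible (((a : ↥(SU3 p k F)) : Matrix.SpecialLinearGroup (Fin 3) F) :
        Matrix (Fin 3) (Fin 3) F) := by
      apply Matrix.invertibleOfIsUnitDet
      rw [((a : ↥(SU3 p k F)) : Matrix.SpecialLinearGroup (Fin 3) F).2]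
      exact isUnit_one
    exact Matrix.blockTriangular_inv_of_blockTriangular ha

end Paper

namespace Paper

/-- The Frobenius–Schur indicator of a character. -/
def FSind {G : Type} [Group G] (χ : G → ℂ) : ℂ :=
  (Nat.card G : ℂ)⁻¹ * ∑ᶠ g : G, χ (g * g)

end Paper

noncomputable section
open Matrix

namespace Paper

/-! ### Linear algebra -/

theorem skew_det_isSquare {K : Type} [Field K] :
    ∀ (N : ℕ) (ι : Type) [Fintype ι] [DecidableEq ι], Fintype.card ι = N →
      ∀ A : Matrix ι ι K, A.transpose = -A → (∀ i, A i i = 0) → IsSquare A.det := by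
  intro N
  induction N using Nat.strong_induction_on with
  | _ N ih =>
  intro ι _ _ hN A hA hd
  by_cases h0 : ∃ i j, A i j ≠ 0
  · obtain ⟨i, j, hij⟩ := h0
    have hne : i ≠ j := by rintro rfl; exact hij (hd i)
    let P : ι → Prop := fun x => x = i ∨ x = j
    let e := Equiv.sumCompl P
    let f : Fin 2 ≃ {x // P x} :=
      { toFun := fun a => if a = 0 then ⟨i, Or.inl rfl⟩ else ⟨j, Or.inr rfl⟩
        invFun := fun x => if x.1 = i then 0 else 1
        left_inv := by intro a; fin_cases a <;> simp [hne.symm]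
        right_inv := by
          rintro ⟨x, hx | hx⟩
          · simp [hx]
          · simp [hx, hne.symm] }
    let e' : Fin 2 ⊕ {x // ¬ P x} ≃ ι := (Equiv.sumCongr f (Equiv.refl _)).trans e
    let M := A.submatrix e' e'
    have hM : M.transpose = -M := by
      ext x y
      have := congrFun (congrFun hA (e' x)) (e' y)
      simpa [M] using this
    have hMd : ∀ x, M x x = 0 := fun x => hd _
    have hdet : M.det = A.det := Matrix.det_submatrix_equiv_self e' A
    have hsk : ∀ x y, M y x = - M x y := fun x y => by
      have := congrFun (congrFun hM x) y
      simpa using this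
    rw [← hdet, ← Matrix.fromBlocks_toBlocks M]
    set a := A i j
    have h11 : M.toBlocks₁₁ = !![0, a; -a, 0] := by
      ext x y
      have hji : A j i = - A i j := by
        have := congrFun (congrFun hA i) j
        simpa using this
      fin_cases x <;> fin_cases y <;> simp [Matrix.toBlocks₁₁, M, e', e, f, hd, a, hji]
    have hdet2 : M.toBlocks₁₁.det = a * a := by rw [h11, Matrix.det_fin_two_of]; ring
    have : Invertible M.toBlocks₁₁ := Matrix.invertibleOfIsUnitDet _ (by
      rw [hdet2]; exact (mul_ne_zero hij hij).isUnit)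
    rw [Matrix.det_fromBlocks₁₁, hdet2]
    have h21 : M.toBlocks₂₁ = - M.toBlocks₁₂.transpose := by
      ext x y; exact hsk (Sum.inl y) (Sum.inr x)
    have hinv : (⅟ M.toBlocks₁₁) = !![0, -a⁻¹; a⁻¹, 0] := by
      apply invOf_eq_right_inv
      rw [h11]
      ext x y
      fin_cases x <;> fin_cases y <;> simp [Matrix.mul_apply, hij, a]
    have hS : IsSquare (M.toBlocks₂₂ - M.toBlocks₂₁ * ⅟ M.toBlocks₁₁ * M.toBlocks₁₂).det := by
      refine ih (Fintype.card {x // ¬ P x}) ?_ _ rfl _ ?_ ?_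
      · rw [← hN]
        exact Fintype.card_subtype_lt (x := i) (by simp [P])
      · rw [hinv, h21]
        ext x y
        simp [Matrix.mul_apply, Fin.sum_univ_two, Matrix.toBlocks₂₂, hsk (Sum.inr x) (Sum.inr y)]
        ring
      · intro x
        rw [hinv, h21]
        simp [Matrix.mul_apply, Fin.sum_univ_two, Matrix.toBlocks₂₂, hMd]
        ring
    exact (IsSquare.mul_self a).mul hS
  · push Not at h0
    have : A = 0 := by ext i j; simp [h0]
    subst this
    by_cases hι : IsEmpty ι
    · exact ⟨1, by simp⟩
    · rw [not_isEmpty_iff] at hι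
      exact ⟨0, by simp⟩

open Polynomial in
theorem det_aeval_roots {n : ℕ} (A : Matrix (Fin n) (Fin n) ℂ) (p : ℂ[X]) :
    (aeval A p).det = (A.charpoly.roots.map (fun x => p.eval x)).prod := by
  have hcard : A.charpoly.roots.card = n := by
    rw [← (IsAlgClosed.splits A.charpoly).natDegree_eq_card_roots, A.charpoly_natDegree_eq_dim,
      Fintype.card_fin]
  have key : ∀ x : ℂ, (A.charpoly.roots.map (fun y => x - y)).prod = A.charpoly.eval x := by
    intro x
    conv_rhs => rw [(IsAlgClosed.splits A.charpoly).eq_prod_roots_of_monic A.charpoly_monic]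
    rw [eval_multiset_prod, Multiset.map_map]
    simp
  have hlin : ∀ x : ℂ, (A - algebraMap ℂ _ x).det =
      (A.charpoly.roots.map (fun y => y - x)).prod := by
    intro x
    have h1 : (A - algebraMap ℂ _ x).det = (-1) ^ n * A.charpoly.eval x := by
      rw [Matrix.eval_charpoly]
      rw [← neg_sub, Matrix.det_neg, Fintype.card_fin]
      rfl
    rw [h1, ← key]
    have : (fun y => y - x) = fun y : ℂ => (-1) * (x - y) := by funext y; ring
    rw [this, Multiset.prod_map_mul]
    simp [hcard]
  have hp := (IsAlgClosed.splits p).eq_prod_roots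
  conv_lhs => rw [hp]
  conv_rhs => rw [hp]
  generalize p.leadingCoeff = a
  generalize p.roots = s
  induction s using Multiset.induction_on with
  | empty => simp [hcard, Matrix.algebraMap_eq_diagonal, Matrix.det_diagonal]
  | cons b s ih =>
    have e1 : C a * ((b ::ₘ s).map (fun a => X - C a)).prod
      = (X - C b) * (C a * (s.map (fun a => X - C a)).prod) := by
      rw [Multiset.map_cons, Multiset.prod_cons]; ring
    rw [e1, map_mul, Matrix.det_mul, ih]
    have e2 : (aeval A (X - C b)).det = (A.charpoly.roots.map (fun y => y - b)).prod := by
      rw [← hlin]; simp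
    rw [e2, ← Multiset.prod_map_mul]
    simp

open Polynomial in
theorem charpoly_aeval_roots {n : ℕ} (A : Matrix (Fin n) (Fin n) ℂ) (p : ℂ[X]) :
    (aeval A p).trace = (A.charpoly.roots.map (fun x => p.eval x)).sum := by
  have h : (aeval A p).charpoly =
      ((A.charpoly.roots.map (fun x => p.eval x)).map (fun y => X - C y)).prod := by
    apply Polynomial.funext
    intro x
    rw [Matrix.eval_charpoly, eval_multiset_prod]
    have := det_aeval_roots A (C x - p)
    rw [map_sub, aeval_C] at this
    rw [show scalar (Fin n) x = algebraMap ℂ _ x from rfl, this]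
    simp [Multiset.map_map]
  rw [Matrix.trace_eq_sum_roots_charpoly, h, roots_multiset_prod_X_sub_C]

open Polynomial in
theorem det_eq_of_trace_pow {n : ℕ} (A B : Matrix (Fin n) (Fin n) ℂ)
    (h : ∀ k : ℕ, (A ^ k).trace = (B ^ k).trace) : A.det = B.det := by
  have hp : ∀ p : ℂ[X], (aeval A p).trace = (aeval B p).trace := by
    intro p
    rw [aeval_eq_sum_range, aeval_eq_sum_range, trace_sum, trace_sum]
    simp [h]
  rw [Matrix.det_eq_prod_roots_charpoly, Matrix.det_eq_prod_roots_charpoly]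
  congr 1
  ext μ
  let S := (A.charpoly.roots.toFinset ∪ B.charpoly.roots.toFinset).erase μ
  let p : ℂ[X] := ∏ ν ∈ S, (X - C ν)
  have hpμ : p.eval μ ≠ 0 := by
    simp only [p, eval_prod, eval_sub, eval_X, eval_C]
    rw [Finset.prod_ne_zero_iff]
    intro ν hν
    have := Finset.ne_of_mem_erase hν
    exact sub_ne_zero.mpr this.symm
  have aux : ∀ s : Multiset ℂ, (∀ x ∈ s, x ≠ μ → x ∈ S) →
      (s.map (fun x => p.eval x)).sum = s.count μ * p.eval μ := by
    intro s hs
    induction s using Multiset.induction_on with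
    | empty => simp
    | cons a s ih =>
      rw [Multiset.map_cons, Multiset.sum_cons, ih (fun x hx => hs x (Multiset.mem_cons_of_mem hx))]
      by_cases ha : a = μ
      · subst ha; simp; ring
      · have : p.eval a = 0 := by
          simp only [p, eval_prod, eval_sub, eval_X, eval_C]
          exact Finset.prod_eq_zero (hs a (Multiset.mem_cons_self a s) ha) (sub_self a)
        rw [this, Multiset.count_cons_of_ne (Ne.symm ha)]; simp
  have h1 := aux A.charpoly.roots (by
    intro x hx hne; simp only [S, Finset.mem_erase, Finset.mem_union, Multiset.mem_toFinset]
    exact ⟨hne, Or.inl hx⟩)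
  have h2 := aux B.charpoly.roots (by
    intro x hx hne; simp only [S, Finset.mem_erase, Finset.mem_union, Multiset.mem_toFinset]
    exact ⟨hne, Or.inr hx⟩)
  rw [← charpoly_aeval_roots] at h1 h2
  rw [hp p, h2] at h1
  have := mul_right_cancel₀ hpμ h1
  exact_mod_cast this.symm

/-- The trace of an idempotent matrix is the dimension of its range. -/
theorem idem_trace {K : Type} [Field K] {ι : Type} [Fintype ι] [DecidableEq ι] (P : Matrix ι ι K)
    (h : P * P = P) :
    P.trace = (Module.finrank K (LinearMap.range (Matrix.toLin' P)) : K) := by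
  have hp : LinearMap.IsProj (LinearMap.range (Matrix.toLin' P)) (Matrix.toLin' P) := by
    constructor
    · intro x; exact ⟨x, rfl⟩
    · rintro _ ⟨y, rfl⟩
      rw [← LinearMap.comp_apply, ← Matrix.toLin'_mul, h]
  rw [← hp.trace, Matrix.trace_toLin'_eq]

end Paper

end

noncomputable section
open Matrix

namespace Paper

/-! ### Matrix representations -/

section Rep

variable {G : Type} [Group G] {n : ℕ} (ρ : G →* GL (Fin n) ℂ)

/-- The underlying matrix of a representation. -/
abbrev mx (g : G) : Matrix (Fin n) (Fin n) ℂ := (ρ g : Matrix (Fin n) (Fin n) ℂ)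

theorem mx_mul (g h : G) : mx ρ (g * h) = mx ρ g * mx ρ h := by simp [mx]

theorem mx_one : mx ρ 1 = 1 := by simp [mx]

theorem mx_mul_inv (g : G) : mx ρ g * mx ρ g⁻¹ = 1 := by rw [← mx_mul, mul_inv_cancel, mx_one]

theorem mx_inv_mul (g : G) : mx ρ g⁻¹ * mx ρ g = 1 := by rw [← mx_mul, inv_mul_cancel, mx_one]

theorem charOf_apply (g : G) : charOf ρ g = (mx ρ g).trace := rfl

theorem charOf_one : charOf ρ 1 = n := by rw [charOf_apply, mx_one]; simp

theorem charOf_conj (g h : G) : charOf ρ (h * g * h⁻¹) = charOf ρ g := by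
  rw [charOf_apply, charOf_apply, mx_mul, mx_mul, trace_mul_comm, ← mul_assoc, mx_inv_mul, one_mul]

theorem schur {ρ : G →* GL (Fin n) ℂ} (hρ : IsIrredRep ρ) (X : Matrix (Fin n) (Fin n) ℂ)
    (hX : ∀ g, mx ρ g * X = X * mx ρ g) : ∃ c : ℂ, X = c • (1 : Matrix (Fin n) (Fin n) ℂ) := by
  obtain ⟨hn, hW⟩ := hρ
  haveI : Nonempty (Fin n) := ⟨⟨0, hn⟩⟩
  obtain ⟨c, hc⟩ := Module.End.exists_eigenvalue (Matrix.toLin' X)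
  refine ⟨c, ?_⟩
  have h := hW (Module.End.eigenspace (Matrix.toLin' X) c) (by
    intro g v hv
    rw [Module.End.mem_eigenspace_iff] at hv ⊢
    rw [Matrix.toLin'_apply] at hv ⊢
    rw [Matrix.mulVec_mulVec, ← hX g, ← Matrix.mulVec_mulVec, hv, Matrix.mulVec_smul])
  rcases h with h | h
  · exact absurd h hc
  · apply Matrix.toLin'.injective
    apply LinearMap.ext
    intro v
    have : v ∈ Module.End.eigenspace (Matrix.toLin' X) c := by rw [h]; trivial
    rw [Module.End.mem_eigenspace_iff] at this
    rw [this]; simp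

theorem average [Fintype G] {ρ : G →* GL (Fin n) ℂ} (hρ : IsIrredRep ρ)
    (X : Matrix (Fin n) (Fin n) ℂ) :
    ∑ g, mx ρ g * X * mx ρ g⁻¹ =
      ((Fintype.card G : ℂ) * X.trace / n) • (1 : Matrix (Fin n) (Fin n) ℂ) := by
  obtain ⟨c, hc⟩ := schur hρ (∑ g, mx ρ g * X * mx ρ g⁻¹) (by
    intro h
    rw [Finset.mul_sum, Finset.sum_mul]
    refine Fintype.sum_equiv (Equiv.mulLeft h) _ _ ?_
    intro g
    simp only [Equiv.coe_mulLeft, _root_.mul_inv_rev, mx_mul]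
    simp only [mul_assoc, mx_inv_mul, mul_one])
  rw [hc]
  have hn : (n : ℂ) ≠ 0 := by exact_mod_cast hρ.1.ne'
  have ht : (∑ g, mx ρ g * X * mx ρ g⁻¹).trace = Fintype.card G * X.trace := by
    rw [trace_sum]
    have : ∀ g, (mx ρ g * X * mx ρ g⁻¹).trace = X.trace := by
      intro g
      rw [trace_mul_comm, ← mul_assoc, mx_inv_mul, one_mul]
    simp [this]
  rw [hc] at ht
  congr 1
  rw [eq_div_iff hn, ← ht]
  simp

theorem char_norm [Fintype G] {ρ : G →* GL (Fin n) ℂ} (hρ : IsIrredRep ρ) :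
    ∑ g, charOf ρ g * charOf ρ g⁻¹ = Fintype.card G := by
  have hn : (n : ℂ) ≠ 0 := by exact_mod_cast hρ.1.ne'
  have key : ∀ i j : Fin n, ∑ g, mx ρ g i i * mx ρ g⁻¹ j j =
      ((Fintype.card G : ℂ) / n) * (if i = j then 1 else 0) := by
    intro i j
    have := congrFun (congrFun (average hρ (Matrix.single i j (1 : ℂ))) i) j
    rw [Matrix.sum_apply] at this
    by_cases hij : i = j
    · subst hij
      simp [Matrix.mul_apply, Matrix.single_apply, Matrix.trace_single_eq_same] at this ⊢
      simpa [Finset.sum_ite, Finset.filter_eq, ite_and] using this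
    · simp [Matrix.mul_apply, Matrix.single_apply, hij] at this ⊢
      simpa [Finset.sum_ite, Finset.filter_eq, ite_and] using this
  calc ∑ g, charOf ρ g * charOf ρ g⁻¹
      = ∑ g, ∑ i, ∑ j, mx ρ g i i * mx ρ g⁻¹ j j := by
        refine Finset.sum_congr rfl fun g _ => ?_
        rw [charOf_apply, charOf_apply, Matrix.trace, Matrix.trace, Finset.sum_mul_sum]
        rfl
    _ = ∑ i, ∑ j, ∑ g, mx ρ g i i * mx ρ g⁻¹ j j := by
        rw [Finset.sum_comm]
        refine Finset.sum_congr rfl fun i _ => ?_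
        rw [Finset.sum_comm]
    _ = Fintype.card G := by
        simp_rw [key]
        simp
        field_simp

open scoped ComplexOrder in
theorem char_inv [Fintype G] (g : G) : charOf ρ g⁻¹ = (starRingEnd ℂ) (charOf ρ g) := by
  classical
  let H : Matrix (Fin n) (Fin n) ℂ := ∑ h, (mx ρ h)ᴴ * mx ρ h
  have hH : H.PosDef := by
    have h1 : ∀ h, ((mx ρ h)ᴴ * mx ρ h).PosSemidef := fun h =>
      Matrix.posSemidef_conjTranspose_mul_self _
    have h2 : H = (1 : Matrix (Fin n) (Fin n) ℂ) +
        ∑ h ∈ Finset.univ.erase (1 : G), (mx ρ h)ᴴ * mx ρ h := by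
      simp only [H]
      rw [← Finset.add_sum_erase Finset.univ _ (Finset.mem_univ (1 : G)), mx_one]
      simp
    rw [h2]
    exact Matrix.PosDef.one.add_posSemidef (Matrix.posSemidef_sum _ fun h _ => h1 h)
  have hinv : (mx ρ g)ᴴ * H * mx ρ g = H := by
    simp only [H, Finset.mul_sum, Finset.sum_mul]
    refine Fintype.sum_equiv (Equiv.mulRight g) _ _ ?_
    intro h
    simp only [Equiv.coe_mulRight, mx_mul, conjTranspose_mul, mul_assoc]
  have hu : IsUnit H.det := (Matrix.isUnit_iff_isUnit_det _).mp hH.isUnit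
  have h3 : (mx ρ g)ᴴ = H * mx ρ g⁻¹ * H⁻¹ := by
    calc (mx ρ g)ᴴ = (mx ρ g)ᴴ * H * (mx ρ g * mx ρ g⁻¹) * H⁻¹ := by
          rw [mx_mul_inv, mul_one, mul_assoc, Matrix.mul_nonsing_inv _ hu, mul_one]
      _ = _ := by rw [← mul_assoc, hinv]
  have h4 : (starRingEnd ℂ) (charOf ρ g) = ((mx ρ g)ᴴ).trace := by
    rw [Matrix.trace_conjTranspose]; rfl
  rw [h4, h3, trace_mul_comm, ← mul_assoc, Matrix.nonsing_inv_mul _ hu, one_mul]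
  rfl

theorem FS_eq_one [Fintype G] {ρ : G →* GL (Fin n) ℂ} (hρ : IsIrredRep ρ)
    (H : Matrix (Fin n) (Fin n) ℂ) (hs : Hᵀ = H) (hu : IsUnit H.det)
    (hinv : ∀ g, (mx ρ g)ᵀ * H * mx ρ g = H) : FSind (charOf ρ) = 1 := by
  have hn : (n : ℂ) ≠ 0 := by exact_mod_cast hρ.1.ne'
  have h3 : ∀ g, (mx ρ g)ᵀ = H * mx ρ g⁻¹ * H⁻¹ := by
    intro g
    calc (mx ρ g)ᵀ = (mx ρ g)ᵀ * H * (mx ρ g * mx ρ g⁻¹) * H⁻¹ := by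
          rw [mx_mul_inv, mul_one, mul_assoc, Matrix.mul_nonsing_inv _ hu, mul_one]
      _ = _ := by rw [← mul_assoc, hinv]
  have hsi : H⁻¹ᵀ = H⁻¹ := by rw [Matrix.transpose_nonsing_inv, hs]
  have key : ∀ i j : Fin n, ∑ g, mx ρ g j i * mx ρ g i j =
      (Fintype.card G : ℂ) / n * (H j i * H⁻¹ i j) := by
    intro i j
    have e1 : ∀ g, mx ρ g j i * mx ρ g i j =
        (mx ρ g * (Matrix.single i j (1 : ℂ) * H) * mx ρ g⁻¹ * H⁻¹) j i := by
      intro g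
      have : mx ρ g i j = (H * mx ρ g⁻¹ * H⁻¹) j i := by rw [← h3]; rfl
      rw [this]
      have : mx ρ g * (Matrix.single i j (1 : ℂ) * H) * mx ρ g⁻¹ * H⁻¹ =
        mx ρ g * (Matrix.single i j (1 : ℂ) * (H * mx ρ g⁻¹ * H⁻¹)) := by
        simp only [mul_assoc]
      rw [this]
      generalize H * mx ρ g⁻¹ * H⁻¹ = Y
      rw [Matrix.mul_apply, Finset.sum_eq_single i]
      · simp [Matrix.single_mul_apply_same]
      · intro b _ hb
        rw [Matrix.single_mul_apply_of_ne _ _ _ _ _ hb, mul_zero]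
      · simp
    simp_rw [e1]
    rw [← Matrix.sum_apply, ← Finset.sum_mul, average hρ]
    have ht : (Matrix.single i j (1 : ℂ) * H).trace = H j i := by
      rw [Matrix.trace_single_mul]; simp
    have hij : H⁻¹ j i = H⁻¹ i j := by conv_rhs => rw [← hsi, Matrix.transpose_apply]
    rw [ht]
    simp [hij]
    ring
  have hsum : ∑ g, charOf ρ (g * g) = Fintype.card G := by
    calc ∑ g, charOf ρ (g * g) = ∑ g, ∑ j, ∑ i, mx ρ g j i * mx ρ g i j := by
          refine Finset.sum_congr rfl fun g _ => ?_
          rw [charOf_apply, mx_mul, Matrix.trace]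
          simp [Matrix.mul_apply]
      _ = ∑ j, ∑ i, ∑ g, mx ρ g j i * mx ρ g i j := by
          rw [Finset.sum_comm]
          refine Finset.sum_congr rfl fun i _ => ?_
          rw [Finset.sum_comm]
      _ = (Fintype.card G : ℂ) / n * (H * H⁻¹).trace := by
          simp_rw [key, ← Finset.mul_sum]
          simp [Matrix.trace, Matrix.mul_apply]
      _ = Fintype.card G := by
          rw [Matrix.mul_nonsing_inv _ hu]; simp; field_simp
  rw [FSind, finsum_eq_sum_of_fintype, hsum, Nat.card_eq_fintype_card]
  have : (Fintype.card G : ℂ) ≠ 0 := by exact_mod_cast Fintype.card_ne_zero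
  field_simp

theorem fixed_nat {H : Type} [Fintype H] [Nonempty H] (f : H → Matrix (Fin n) (Fin n) ℂ)
    (hf : ∀ w, ∃ e : Equiv.Perm H, ∀ z, f w * f z = f (e z)) :
    ∃ r : ℕ, ∑ h, (f h).trace = (Fintype.card H : ℂ) * r := by
  let E := ∑ h, f h
  have h1 : ∀ w, f w * E = E := by
    intro w
    obtain ⟨e, he⟩ := hf w
    simp only [E, Finset.mul_sum, he]
    exact Equiv.sum_comp e f
  have h2 : E * E = (Fintype.card H : ℂ) • E := by
    conv_lhs => enter [1]; simp only [E]
    rw [Finset.sum_mul]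
    simp [h1, Nat.cast_smul_eq_nsmul]
  have hc : (Fintype.card H : ℂ) ≠ 0 := by exact_mod_cast Fintype.card_ne_zero
  have h3 := idem_trace ((Fintype.card H : ℂ)⁻¹ • E) (by
    rw [smul_mul_smul_comm, h2, smul_smul]; congr 1; field_simp)
  refine ⟨Module.finrank ℂ (LinearMap.range (Matrix.toLin' ((Fintype.card H : ℂ)⁻¹ • E))), ?_⟩
  rw [← h3, trace_smul, ← trace_sum]
  simp only [smul_eq_mul]
  field_simp
  rfl

theorem normal_sum {ρ : G →* GL (Fin n) ℂ} (hρ : IsIrredRep ρ) {Z : Type} [Fintype Z]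
    (i : Z → G)
    (hf : ∀ w, ∃ e : Equiv.Perm Z, ∀ z, i w * i z = i (e z))
    (hN : ∀ g, ∃ e : Equiv.Perm Z, ∀ z, g * i z = i (e z) * g) :
    (∑ z, mx ρ (i z) = 0) ∨ ∀ z, mx ρ (i z) = 1 := by
  obtain ⟨c, hc⟩ := schur hρ (∑ z, mx ρ (i z)) (by
    intro g
    obtain ⟨e, he⟩ := hN g
    rw [Finset.mul_sum, Finset.sum_mul]
    simp only [← mx_mul, he]
    exact Equiv.sum_comp e (fun z => mx ρ (i z * g)))
  by_cases h0 : c = 0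
  · left; rw [hc, h0, zero_smul]
  · right
    intro w
    have h1 : mx ρ (i w) * ∑ z, mx ρ (i z) = ∑ z, mx ρ (i z) := by
      obtain ⟨e, he⟩ := hf w
      simp only [Finset.mul_sum, ← mx_mul, he]
      exact Equiv.sum_comp e (fun z => mx ρ (i z))
    rw [hc, Algebra.mul_smul_comm, mul_one] at h1
    exact smul_right_injective _ h0 h1

end Rep

end Paper

end

noncomputable section
open Matrix

namespace Paper

/-! ### The finite field and the unipotent group -/

/-- Standing assumptions: `F` has `q²` elements, `q` an odd power of the characteristic. -/
class Su (q : ℕ) (F : Type) [Field F] [Fintype F] : Prop where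
  add_pow : ∀ x y : F, (x + y) ^ q = x ^ q + y ^ q
  odd : Odd q
  one_lt : 1 < q
  card : Fintype.card F = q ^ 2

set_option linter.unusedSectionVars false

section Fld

variable (q : ℕ) {F : Type} [Field F] [Fintype F] [hS : Su q F]

/-- The involution `x ↦ x^q`. -/
def sg : F →+* F where
  toFun x := x ^ q
  map_one' := one_pow q
  map_mul' x y := mul_pow x y q
  map_zero' := zero_pow (by have := hS.one_lt; omega)
  map_add' := hS.add_pow

theorem sg_apply (x : F) : sg q x = x ^ q := rfl

@[simp] theorem sg_sg (x : F) : sg q (sg q x) = x := by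
  rw [sg_apply, sg_apply, ← pow_mul, ← pow_two, ← hS.card, FiniteField.pow_card]

theorem q_ge (q : ℕ) (F : Type) [Field F] [Fintype F] [hS : Su q F] : 3 ≤ q := by
  have h1 := hS.one_lt; obtain ⟨m, hm⟩ := hS.odd; omega

theorem two_ne (q : ℕ) {F : Type} [Field F] [Fintype F] [hS : Su q F] : (2 : F) ≠ 0 := by
  intro h
  have h1 : ringChar F = 2 := by
    have : CharP F 2 := CharTwo.of_one_ne_zero_of_two_eq_zero one_ne_zero h
    exact ringChar.eq F 2 |>.symm ▸ rfl
  have h2 := FiniteField.even_card_iff_char_two.mp h1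
  rw [hS.card] at h2
  have := hS.odd.pow (n := 2)
  rw [Nat.odd_iff] at this
  omega

variable (F) in
/-- Trace zero elements. -/
abbrev Zt := {z : F // sg q z = -z}

variable (F) in
/-- Fixed elements. -/
abbrev Fx := {z : F // sg q z = z}

variable [DecidableEq F]

theorem card_Fx_le : Fintype.card (Fx q F) ≤ q := by
  have h3 := q_ge q F
  have hne : (Polynomial.X ^ q - Polynomial.X : Polynomial F) ≠ 0 :=
    FiniteField.X_pow_card_sub_X_ne_zero F (by omega)
  have hd : (Polynomial.X ^ q - Polynomial.X : Polynomial F).natDegree = q :=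
    FiniteField.X_pow_card_sub_X_natDegree_eq F (by omega)
  rw [Fintype.card_subtype]
  calc _ ≤ (Polynomial.X ^ q - Polynomial.X : Polynomial F).roots.toFinset.card := by
        apply Finset.card_le_card
        intro x hx
        have hx : x ^ q = x := (Finset.mem_filter.mp hx).2
        simp [hne, hx]
    _ ≤ _ := Multiset.toFinset_card_le _
    _ ≤ _ := Polynomial.card_roots' _
    _ = q := hd

theorem card_Zt_le : Fintype.card (Zt q F) ≤ q := by
  have h3 := q_ge q F
  have hd : (Polynomial.X ^ q + Polynomial.X : Polynomial F).natDegree = q := by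
    rw [Polynomial.natDegree_add_eq_left_of_natDegree_lt] <;> simp; omega
  have hne : (Polynomial.X ^ q + Polynomial.X : Polynomial F) ≠ 0 := by
    intro h; rw [h] at hd; simp at hd; omega
  rw [Fintype.card_subtype]
  calc _ ≤ (Polynomial.X ^ q + Polynomial.X : Polynomial F).roots.toFinset.card := by
        apply Finset.card_le_card
        intro x hx
        have hx : x ^ q = -x := (Finset.mem_filter.mp hx).2
        simp [hne, hx]
    _ ≤ _ := Multiset.toFinset_card_le _
    _ ≤ _ := Polynomial.card_roots' _
    _ = q := hd

theorem half_add (q : ℕ) {F : Type} [Field F] [Fintype F] [hS : Su q F] (x : F) : x / 2 + x / 2 = x := by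
  have := two_ne q (F := F); field_simp; ring

theorem sg_two : sg q (2 : F) = 2 := map_ofNat _ 2

/-- `F = Fx ⊕ Zt`. -/
def fxzt : F ≃ Fx q F × Zt q F where
  toFun x := (⟨(x + sg q x) / 2, by
      rw [map_div₀, sg_two, map_add, sg_sg, add_comm]⟩,
    ⟨(x - sg q x) / 2, by rw [map_div₀, sg_two, map_sub, sg_sg]; ring⟩)
  invFun y := y.1.1 + y.2.1
  left_inv x := by
    have := two_ne q (F := F)
    simp only; field_simp; ring
  right_inv y := by
    have := two_ne q (F := F)
    obtain ⟨⟨a, ha⟩, ⟨b, hb⟩⟩ := y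
    simp only [Prod.mk.injEq, Subtype.mk.injEq, map_add, ha, hb]
    constructor <;> field_simp <;> ring

theorem card_mul : Fintype.card (Fx q F) * Fintype.card (Zt q F) = q * q := by
  rw [← Fintype.card_prod, ← Fintype.card_congr (fxzt q), hS.card, pow_two]

theorem card_Zt : Fintype.card (Zt q F) = q := by
  have h1 := card_Fx_le q (F := F)
  have h2 := card_Zt_le q (F := F)
  have h3 := card_mul q (F := F)
  have := q_ge q F
  nlinarith

theorem card_Fx : Fintype.card (Fx q F) = q := by
  have h1 := card_Fx_le q (F := F)
  have h2 := card_Zt_le q (F := F)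
  have h3 := card_mul q (F := F)
  have := q_ge q F
  nlinarith

/-- The norm. -/
def nm (x : F) : F := x * sg q x

theorem nm_eq_pow (x : F) : nm q x = x ^ (q + 1) := by rw [nm, sg_apply]; ring

theorem nm_mul (x y : F) : nm q (x * y) = nm q x * nm q y := by simp only [nm, _root_.map_mul]; ring

theorem sg_nm (x : F) : sg q (nm q x) = nm q x := by simp only [nm, _root_.map_mul, sg_sg]; ring

theorem nm_ne {x : F} (h : x ≠ 0) : nm q x ≠ 0 := by
  rw [nm_eq_pow]; exact pow_ne_zero _ h

theorem card_units' (q : ℕ) {F : Type} [Field F] [Fintype F] [hS : Su q F] : Nat.card Fˣ = (q + 1) * (q - 1) := by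
  classical
  rw [Nat.card_eq_fintype_card, Fintype.card_units, hS.card]
  have := q_ge q F
  obtain ⟨m, rfl⟩ : ∃ m, q = m + 1 := ⟨q - 1, by omega⟩
  simp only [Nat.add_sub_cancel]
  rw [Nat.sub_eq_iff_eq_add (Nat.one_le_pow _ _ (by omega))]
  ring

theorem exists_nm {x : F} (h0 : x ≠ 0) (hx : sg q x = x) : ∃ y : Fˣ, nm q (y : F) = x := by
  have h3 := q_ge q F
  obtain ⟨g, hg⟩ := IsCyclic.exists_ofOrder_eq_natCard (α := Fˣ)
  have hg' : ∀ u : Fˣ, u ∈ Submonoid.powers g := by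
    intro u
    rw [mem_powers_iff_mem_zpowers]
    have := Subgroup.eq_top_of_card_eq (Subgroup.zpowers g) (by rw [Nat.card_zpowers, hg])
    rw [this]; trivial
  obtain ⟨m, hm⟩ := hg' (Units.mk0 x h0)
  have hx1 : x ^ (q - 1) = 1 := by
    have : x ^ (q - 1) * x = 1 * x := by rw [← pow_succ, Nat.sub_add_cancel (by omega), one_mul]; exact hx
    exact mul_right_cancel₀ h0 this
  have h2 : g ^ (m * (q - 1)) = 1 := by
    rw [pow_mul]; simp only at hm; rw [hm]; ext; simpa using hx1
  rw [← orderOf_dvd_iff_pow_eq_one, hg, card_units' q] at h2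
  have h4 := Nat.dvd_of_mul_dvd_mul_right (by omega) h2
  obtain ⟨l, rfl⟩ := h4
  refine ⟨g ^ l, ?_⟩
  rw [nm_eq_pow]
  have := congrArg Units.val hm
  simp only [Units.val_mk0, Units.val_pow_eq_pow_val] at this
  rw [← this]; push_cast; rw [← pow_mul, mul_comm]

theorem card_C : (Finset.univ.filter fun t : Fˣ => nm q (t : F) = 1).card = q + 1 := by
  have h := IsCyclic.card_powMonoidHom_ker (G := Fˣ) (q + 1)
  rw [card_units' q, Nat.gcd_eq_right (Dvd.intro _ rfl)] at h
  rw [← h, Nat.card_eq_fintype_card, Fintype.card_subtype]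
  congr 1
  ext t
  simp only [Finset.mem_filter, Finset.mem_univ, true_and, MonoidHom.mem_ker, powMonoidHom_apply,
    nm_eq_pow, Units.ext_iff, Units.val_pow_eq_pow_val, Units.val_one]

theorem card_Cm : (Finset.univ.filter fun t : Fˣ => nm q (t : F) = -1).card = q + 1 := by
  obtain ⟨y, hy⟩ := exists_nm q (x := (-1 : F)) (by simp) (by simp)
  rw [← card_C q (F := F)]
  symm
  refine Finset.card_bij (fun t _ => t * y) ?_ ?_ ?_
  · intro t ht
    simp only [Finset.mem_filter, Finset.mem_univ, true_and] at ht ⊢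
    rw [Units.val_mul, nm_mul, ht, hy, one_mul]
  · intro a _ b _ h; exact mul_right_cancel h
  · intro t ht
    simp only [Finset.mem_filter, Finset.mem_univ, true_and] at ht
    refine ⟨t * y⁻¹, ?_, by simp⟩
    simp only [Finset.mem_filter, Finset.mem_univ, true_and]
    have h : nm q ((t * y⁻¹ : Fˣ) : F) * nm q (y : F) = nm q (t : F) := by
      rw [← nm_mul, ← Units.val_mul]; simp
    rw [ht, hy] at h
    linear_combination -h

end Fld

end Paper

end

noncomputable section
open Matrix

namespace Paper

set_option linter.unusedSectionVars false

section UU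

variable (q : ℕ) (F : Type) [Field F] [Fintype F] [hS : Su q F] [DecidableEq F]

/-- The unipotent group, as pairs `(a,b)`. -/
abbrev Pt := {x : F × F // x.2 + sg q x.2 + nm q x.1 = 0}

variable {q F}

/-- Constructor. -/
abbrev Pt.mk (a b : F) (h : b + sg q b + nm q a = 0) : Pt q F := ⟨(a, b), h⟩

theorem Pt.ext {x y : Pt q F} (h1 : x.1.1 = y.1.1) (h2 : x.1.2 = y.1.2) : x = y :=
  Subtype.ext (Prod.ext h1 h2)

theorem Pt.prop (x : Pt q F) : sg q x.1.2 = - x.1.2 - x.1.1 * sg q x.1.1 := by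
  have := x.2; rw [nm] at this; linear_combination this

instance : Group (Pt q F) where
  mul x y := Pt.mk (x.1.1 + y.1.1) (x.1.2 + y.1.2 - sg q x.1.1 * y.1.1) (by
    simp only [nm, map_add, map_sub, _root_.map_mul, sg_sg, Pt.prop]; ring)
  one := Pt.mk 0 0 (by simp [nm])
  inv x := Pt.mk (-x.1.1) (sg q x.1.2) (by
    have := Pt.prop x
    rw [sg_sg, nm, map_neg]; linear_combination this)
  mul_assoc x y z := by
    apply Pt.ext
    · exact add_assoc _ _ _
    · change x.1.2 + y.1.2 - sg q x.1.1 * y.1.1 + z.1.2 - sg q (x.1.1 + y.1.1) * z.1.1 =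
        x.1.2 + (y.1.2 + z.1.2 - sg q y.1.1 * z.1.1) - sg q x.1.1 * (y.1.1 + z.1.1)
      rw [map_add]; ring
  one_mul x := by
    apply Pt.ext
    · exact zero_add _
    · change 0 + x.1.2 - sg q 0 * x.1.1 = x.1.2
      rw [map_zero]; ring
  mul_one x := by
    apply Pt.ext
    · exact add_zero _
    · change x.1.2 + 0 - sg q x.1.1 * 0 = x.1.2
      ring
  inv_mul_cancel x := by
    apply Pt.ext
    · exact neg_add_cancel _
    · change sg q x.1.2 + x.1.2 - sg q (-x.1.1) * x.1.1 = 0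
      rw [Pt.prop, map_neg]; ring

@[simp] theorem Pt.mul_a (x y : Pt q F) : (x * y).1.1 = x.1.1 + y.1.1 := rfl
@[simp] theorem Pt.mul_b (x y : Pt q F) : (x * y).1.2 = x.1.2 + y.1.2 - sg q x.1.1 * y.1.1 := rfl
@[simp] theorem Pt.one_a : (1 : Pt q F).1.1 = 0 := rfl
@[simp] theorem Pt.one_b : (1 : Pt q F).1.2 = 0 := rfl
@[simp] theorem Pt.inv_a (x : Pt q F) : (x⁻¹).1.1 = -x.1.1 := rfl
@[simp] theorem Pt.inv_b (x : Pt q F) : (x⁻¹).1.2 = sg q x.1.2 := rfl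

/-- Central elements. -/
def zz (z : Zt q F) : Pt q F := Pt.mk 0 z.1 (by rw [z.2]; simp [nm])

@[simp] theorem zz_a (z : Zt q F) : (zz z).1.1 = 0 := rfl
@[simp] theorem zz_b (z : Zt q F) : (zz z).1.2 = z.1 := rfl

/-- section `a ↦ (a, -N(a)/2)`. -/
def vv (a : F) : Pt q F := Pt.mk a (-nm q a / 2) (by
  have := two_ne q (F := F)
  rw [map_div₀, sg_two, map_neg, sg_nm]; field_simp; ring)

@[simp] theorem vv_a (a : F) : (vv a : Pt q F).1.1 = a := rfl
@[simp] theorem vv_b (a : F) : (vv a : Pt q F).1.2 = -nm q a / 2 := rfl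

/-- Coordinates on the unipotent group. -/
def ptEquiv : F × Zt q F ≃ Pt q F where
  toFun y := zz y.2 * vv y.1
  invFun x := (x.1.1, ⟨x.1.2 + nm q x.1.1 / 2, by
    have := two_ne q (F := F)
    rw [map_add, map_div₀, sg_two, sg_nm, Pt.prop, nm]; field_simp; ring⟩)
  left_inv y := by
    ext <;> simp
    ring
  right_inv x := by
    apply Pt.ext <;> simp
    ring

theorem card_Pt : Fintype.card (Pt q F) = q ^ 3 := by
  rw [← Fintype.card_congr (ptEquiv (q := q) (F := F)), Fintype.card_prod, card_Zt, hS.card]; ring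

variable (q) in
/-- The factor by which the torus acts on the first coordinate. -/
def ss (t : Fˣ) : F := sg q (t : F) ^ 2 * (t : F)⁻¹

theorem ss_mul (t u : Fˣ) : ss q (t * u) = ss q t * ss q u := by
  simp only [ss, Units.val_mul, _root_.map_mul, _root_.mul_inv_rev]; ring

theorem ss_one : ss q (1 : Fˣ) = 1 := by simp [ss]

theorem sg_ne {x : F} (h : x ≠ 0) : sg q x ≠ 0 := by
  intro h1; exact h ((map_eq_zero _).mp h1)

theorem nm_ss (t : Fˣ) : nm q (ss q t) = nm q (t : F) := by
  have h1 := t.ne_zero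
  have h2 := sg_ne (q := q) h1
  simp only [nm, ss, _root_.map_mul, map_pow, sg_sg, map_inv₀]
  field_simp

/-- The action of the torus. -/
def act (t : Fˣ) : Pt q F →* Pt q F where
  toFun x := Pt.mk (ss q t * x.1.1) (nm q (t : F) * x.1.2) (by
    have := x.2
    rw [nm_mul, nm_ss, _root_.map_mul, sg_nm, ← mul_add, ← mul_add, this, mul_zero])
  map_one' := by apply Pt.ext <;> simp
  map_mul' x y := by
    apply Pt.ext
    · simp; ring
    · have := nm_ss (q := q) t
      rw [nm] at this
      simp only [Pt.mul_a, Pt.mul_b, _root_.map_mul]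
      rw [← this]; ring

@[simp] theorem act_a (t : Fˣ) (x : Pt q F) : (act t x).1.1 = ss q t * x.1.1 := rfl
@[simp] theorem act_b (t : Fˣ) (x : Pt q F) : (act t x).1.2 = nm q (t : F) * x.1.2 := rfl

theorem act_mul (t u : Fˣ) (x : Pt q F) : act (t * u) x = act t (act u x) := by
  apply Pt.ext
  · simp [ss_mul]; ring
  · simp [nm_mul]; ring

theorem act_one (x : Pt q F) : act 1 x = x := by
  apply Pt.ext <;> simp [ss_one, nm]

end UU

/-- A group with the structure of the Borel subgroup. -/
structure BG (q : ℕ) (F : Type) [Field F] [Fintype F] [Su q F] [DecidableEq F]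
    (G : Type) [Group G] where
  /-- unipotent part -/
  U : Pt q F →* G
  /-- torus -/
  D : Fˣ →* G
  conj : ∀ t x, D t * U x = U (act t x) * D t
  bij : Function.Bijective (fun y : Pt q F × Fˣ => U y.1 * D y.2)

end Paper

end

noncomputable section
open Matrix

namespace Paper

set_option linter.unusedSectionVars false

section BB

variable {p k q : ℕ} {F : Type} [Field F] [Fintype F] [ExpChar F p] [hS : Su q F] [DecidableEq F]

theorem Om_eq : Om F = !![0, 0, 1; 0, 1, 0; 1, 0, 0] := by
  ext i j; fin_cases i <;> fin_cases j <;> simp [Om]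

theorem Phi_eq (hq : q = p ^ k) (a b c d e f g h i : F) :
    Phi p k F !![a, b, c; d, e, f; g, h, i] =
      !![sg q a, sg q b, sg q c; sg q d, sg q e, sg q f; sg q g, sg q h, sg q i] := by
  have : iterateFrobenius F p k = sg q := by
    ext x; rw [iterateFrobenius_def, sg_apply, hq]
  rw [Phi, this]
  ext i j; fin_cases i <;> fin_cases j <;> rfl

/-- Membership in `SU3` for an explicit matrix. -/
theorem mem_SU3_iff (g : Matrix.SpecialLinearGroup (Fin 3) F) :
    g ∈ SU3 p k F ↔ (Phi p k F g.val)ᵀ * Om F * g.val = Om F := Iff.rfl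

/-- matrix of a unipotent element -/
def uM (x : Pt q F) : Matrix (Fin 3) (Fin 3) F :=
  !![1, -sg q x.1.1, x.1.2; 0, 1, x.1.1; 0, 0, 1]

variable (q) in
/-- matrix of a torus element -/
def dM (t : Fˣ) : Matrix (Fin 3) (Fin 3) F :=
  !![(t : F), 0, 0; 0, sg q (t : F) * (t : F)⁻¹, 0; 0, 0, (sg q (t : F))⁻¹]

theorem uM_mul (x y : Pt q F) : uM (x * y) = uM x * uM y := by
  ext i j
  fin_cases i <;> fin_cases j <;> simp [uM, Matrix.mul_apply, Fin.sum_univ_three] <;> ring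

theorem dM_mul (t u : Fˣ) : dM q (t * u) = dM q t * dM q u := by
  ext i j
  fin_cases i <;> fin_cases j <;> simp [dM, Matrix.mul_apply, Fin.sum_univ_three] <;> ring

theorem du_conj (t : Fˣ) (x : Pt q F) : dM q t * uM x = uM (act t x) * dM q t := by
  have h1 := t.ne_zero
  have h2 := sg_ne (q := q) h1
  ext i j
  fin_cases i <;> fin_cases j <;>
    simp [uM, dM, Matrix.mul_apply, Fin.sum_univ_three, ss, nm] <;> field_simp

/-- unipotent element as an element of the Borel subgroup -/
def uB (hq : q = p ^ k) (x : Pt q F) : Borel p k F :=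
  ⟨⟨⟨uM x, by rw [uM, Matrix.det_fin_three]; simp⟩, by
    change (Phi p k F (uM x))ᵀ * Om F * uM x = Om F
    simp only [uM]
    rw [Phi_eq hq, Om_eq]
    have := x.prop
    ext i j
    fin_cases i <;> fin_cases j <;>
      simp [Matrix.mul_apply, Fin.sum_univ_three, this] <;> ring⟩, by
    intro i j hij
    change uM x i j = 0
    fin_cases i <;> fin_cases j <;> simp_all [uM]⟩

/-- torus element as an element of the Borel subgroup -/
def dB (hq : q = p ^ k) (t : Fˣ) : Borel p k F :=
  ⟨⟨⟨dM q t, by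
      have h1 := t.ne_zero
      have h2 := sg_ne (q := q) h1
      rw [dM, Matrix.det_fin_three]; simp; field_simp⟩, by
    have h1 := t.ne_zero
    have h2 := sg_ne (q := q) h1
    change (Phi p k F (dM q t))ᵀ * Om F * dM q t = Om F
    simp only [dM]
    rw [Phi_eq hq, Om_eq]
    ext i j
    fin_cases i <;> fin_cases j <;>
      simp [Matrix.mul_apply, Fin.sum_univ_three, h1, h2]; field_simp⟩, by
    intro i j hij
    change dM q t i j = 0
    fin_cases i <;> fin_cases j <;> simp_all [dM]⟩

theorem borel_ext {g h : Borel p k F}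
    (H : ((g : SU3 p k F) : Matrix.SpecialLinearGroup (Fin 3) F).val =
      ((h : SU3 p k F) : Matrix.SpecialLinearGroup (Fin 3) F).val) : g = h :=
  Subtype.ext (Subtype.ext (Subtype.ext H))

/-- The Borel subgroup has the expected structure. -/
def borelBG (hq : q = p ^ k) : BG q F (Borel p k F) where
  U := MonoidHom.mk' (uB hq) fun x y => borel_ext (uM_mul x y)
  D := MonoidHom.mk' (dB hq) fun x y => borel_ext (dM_mul x y)
  conj t x := borel_ext (du_conj t x)
  bij := by
    constructor
    · rintro ⟨x, t⟩ ⟨y, u⟩ h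
      have h' : uM x * dM q t = uM y * dM q u := congrArg (fun g : Borel p k F =>
        ((g : SU3 p k F) : Matrix.SpecialLinearGroup (Fin 3) F).val) h
      have h00 := congrFun (congrFun h' 0) 0
      have h12 := congrFun (congrFun h' 1) 2
      have h02 := congrFun (congrFun h' 0) 2
      simp [uM, dM, Matrix.mul_apply, Fin.sum_univ_three] at h00 h12 h02
      have ht : t = u := Units.ext h00
      subst ht
      have h2 := sg_ne (q := q) t.ne_zero
      have h3 := inv_ne_zero h2
      rw [Prod.mk.injEq]
      exact ⟨Pt.ext (mul_right_cancel₀ h3 h12) (mul_right_cancel₀ h3 h02), rfl⟩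
    · rintro ⟨⟨⟨g, hdet⟩, hsu⟩, htri⟩
      have h10 : g 1 0 = 0 := htri (show (0 : Fin 3) < 1 by decide)
      have h20 : g 2 0 = 0 := htri (show (0 : Fin 3) < 2 by decide)
      have h21 : g 2 1 = 0 := htri (show (1 : Fin 3) < 2 by decide)
      obtain ⟨a, b, c, e, f, i, rfl⟩ : ∃ a b c e f i, g = !![a, b, c; 0, e, f; 0, 0, i] := by
        refine ⟨g 0 0, g 0 1, g 0 2, g 1 1, g 1 2, g 2 2, ?_⟩
        ext r s; fin_cases r <;> fin_cases s <;> simp [h10, h20, h21]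
      have hsu' : (Phi p k F !![a, b, c; 0, e, f; 0, 0, i])ᵀ * Om F *
        !![a, b, c; 0, e, f; 0, 0, i] = Om F := hsu
      rw [Phi_eq hq, Om_eq] at hsu'
      have e02 := congrFun (congrFun hsu' 0) 2
      have e11 := congrFun (congrFun hsu' 1) 1
      have e12 := congrFun (congrFun hsu' 1) 2
      have e22 := congrFun (congrFun hsu' 2) 2
      simp [Matrix.mul_apply, Fin.sum_univ_three] at e02 e11 e12 e22
      have hd : a * e * i = 1 := by
        have := hdet; rw [Matrix.det_fin_three] at this; simpa using this
      have ha : a ≠ 0 := by rintro rfl; simp at hd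
      have hi : i ≠ 0 := by rintro rfl; simp at hd
      have he : e ≠ 0 := by rintro rfl; simp at hd
      have hsa := sg_ne (q := q) ha
      have hsi := sg_ne (q := q) hi
      have hse := sg_ne (q := q) he
      have hi' : i = (sg q a)⁻¹ := by field_simp; linear_combination e02
      have he' : e = sg q a * a⁻¹ := by
        rw [hi'] at hd; field_simp at hd ⊢; exact hd
      have hsi' : sg q i = a⁻¹ := by rw [hi', map_inv₀, sg_sg]
      have hse' : sg q e = a * (sg q a)⁻¹ := by rw [he', _root_.map_mul, map_inv₀, sg_sg]
      have hb' : -(sg q f * sg q a) = b := by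
        have h5 : sg q b = -(a * f) := by
          rw [hse', hi'] at e12
          field_simp at e12
          linear_combination e12
        rw [← sg_sg q b, h5, map_neg, _root_.map_mul]; ring
      refine ⟨(Pt.mk (f * sg q a) (c * sg q a) ?_, Units.mk0 a ha), ?_⟩
      · rw [nm]
        simp only [_root_.map_mul, sg_sg]
        rw [hsi', hi'] at e22
        field_simp at e22
        linear_combination e22
      · apply borel_ext
        change uM _ * dM q _ = _
        ext r s
        fin_cases r <;> fin_cases s <;>
          simp [uM, dM, Matrix.mul_apply, Fin.sum_univ_three]
        · rw [← hb']; field_simp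
        · field_simp
        · exact he'.symm
        · field_simp
        · exact hi'.symm

end BB

end Paper

end

noncomputable section
open Matrix

namespace Paper

set_option linter.unusedSectionVars false

section Psi

variable {q : ℕ} {F : Type} [Field F] [Fintype F] [hS : Su q F] [DecidableEq F]
variable {G : Type} [Group G] [Fintype G]

/-- Zero trace element `0`. -/
def z0 : Zt q F := ⟨0, by simp⟩

theorem zz_z0 : zz (z0 : Zt q F) = 1 := rfl

theorem zt_sum (f : Zt q F → ℚ) (c : ℚ) (h : ∀ z : Zt q F, z.1 ≠ 0 → f z = c) :
    ∑ z, f z = f z0 + (q - 1) * c := by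
  rw [← Finset.add_sum_erase Finset.univ f (Finset.mem_univ z0)]
  congr 1
  rw [Finset.sum_congr rfl (g := fun _ => c)]
  · rw [Finset.sum_const, Finset.card_erase_of_mem (Finset.mem_univ _), Finset.card_univ, card_Zt,
      nsmul_eq_mul, Nat.cast_sub (by have := q_ge q F; omega)]
    simp
  · intro z hz
    apply h
    intro h0
    exact Finset.ne_of_mem_erase hz (Subtype.ext h0)

theorem ss_nm {t : Fˣ} (h : ss q t = 1) : nm q (t : F) = 1 := by
  rw [← nm_ss, h]; simp [nm]

theorem act_triv {t : Fˣ} (h : ss q t = 1) (x : Pt q F) : act t x = x := by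
  apply Pt.ext <;> simp [h, ss_nm h]

theorem BG.sum (B : BG q F G) {M : Type} [AddCommMonoid M] (f : G → M) :
    ∑ g, f g = ∑ t : Fˣ, ∑ x : Pt q F, f (B.U x * B.D t) := by
  rw [← Fintype.sum_equiv (Equiv.ofBijective _ B.bij) (fun y => f (B.U y.1 * B.D y.2)) f
    (fun _ => rfl), Fintype.sum_prod_type, Finset.sum_comm]

theorem BG.card (B : BG q F G) : (Fintype.card G : ℚ) = q ^ 3 * (q ^ 2 - 1) := by
  rw [← Fintype.card_congr (Equiv.ofBijective _ B.bij), Fintype.card_prod, card_Pt,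
    Fintype.card_units, hS.card]
  have := q_ge q F
  rw [Nat.cast_mul, Nat.cast_sub (by nlinarith)]; push_cast; rfl

theorem BG.twist (B : BG q F G) (t : Fˣ) (y : Pt q F) :
    B.U y * B.D t * (B.U y)⁻¹ = B.U (y * act t y⁻¹) * B.D t := by
  rw [_root_.map_mul, mul_assoc, mul_assoc, ← B.conj, map_inv]

/-- The bijection used to simplify twisted sums. -/
theorem twist_bij {t : Fˣ} (ht : ss q t ≠ 1) :
    Function.Bijective (fun y : F × Zt q F => zz y.2 * (vv y.1 * act t (vv y.1 : Pt q F)⁻¹)) := by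
  rw [Fintype.bijective_iff_injective_and_card]
  refine ⟨?_, Fintype.card_congr ptEquiv⟩
  rintro ⟨a, z⟩ ⟨b, w⟩ h
  have h1 := congrArg (fun x : Pt q F => x.1.1) h
  simp only [Pt.mul_a, zz_a, vv_a, act_a, Pt.inv_a] at h1
  have h2 : (1 - ss q t) * a = (1 - ss q t) * b := by linear_combination h1
  have h3 : a = b := mul_left_cancel₀ (sub_ne_zero.mpr (Ne.symm ht)) h2
  subst h3
  have h4 := mul_right_cancel h
  have h5 : z.1 = w.1 := congrArg (fun x : Pt q F => x.1.2) h4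
  rw [Prod.mk.injEq]
  exact ⟨rfl, Subtype.ext h5⟩

theorem zz_comm (z : Zt q F) (x : Pt q F) : zz z * x = x * zz z := by
  apply Pt.ext
  · simp
  · simp; ring

theorem BG.twist' (B : BG q F G) (t : Fˣ) (z : Zt q F) (y : Pt q F) :
    B.U (zz z * (y * act t y⁻¹)) * B.D t = B.U y * (B.U (zz z) * B.D t) * (B.U y)⁻¹ := by
  rw [_root_.map_mul, mul_assoc, ← B.twist, ← mul_assoc, ← mul_assoc, ← mul_assoc,
    ← _root_.map_mul, ← _root_.map_mul, zz_comm]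

theorem twist_sum (B : BG q F G) {t : Fˣ} (ht : ss q t ≠ 1) (f : G → ℚ)
    (hf : ∀ g h, f (h * g * h⁻¹) = f g) :
    ∑ x, f (B.U x * B.D t) = q ^ 2 * ∑ z, f (B.U (zz z) * B.D t) := by
  rw [← Fintype.sum_equiv (Equiv.ofBijective _ (twist_bij (q := q) ht)) _
    (fun x => f (B.U x * B.D t)) (fun _ => rfl), Fintype.sum_prod_type]
  simp only [Equiv.ofBijective_apply, B.twist', hf]
  rw [Finset.sum_const, Finset.card_univ, hS.card, nsmul_eq_mul]
  push_cast; rfl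

/-- The properties of the character that we need. -/
structure Psi (B : BG q F G) (ψ : G → ℚ) : Prop where
  conj : ∀ g h, ψ (h * g * h⁻¹) = ψ g
  zsum : ∀ g, ∑ z : Zt q F, ψ (B.U (zz z) * g) = 0
  triv : ∀ t, ss q t = 1 → ∀ g, ψ (g * B.D t) = ψ g
  one : ψ 1 = q ^ 2 - q
  norm : ∑ g, ψ g ^ 2 = Fintype.card G
  fs : ∑ g, ψ (g * g) = Fintype.card G
  tor : ∃ r : ℕ, ∑ t, ψ (B.D t) = (q ^ 2 - 1) * r

variable {B : BG q F G} {ψ : G → ℚ}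

theorem Psi.zero (h : Psi B ψ) {g : G} (hg : ∀ z : Zt q F, ψ (B.U (zz z) * g) = ψ g) :
    ψ g = 0 := by
  have := h.zsum g
  have hq : (q : ℚ) ≠ 0 := by have := q_ge q F; positivity
  simp only [hg, Finset.sum_const, Finset.card_univ, card_Zt, nsmul_eq_mul] at this
  exact (mul_eq_zero.mp this).resolve_left hq

theorem Psi.valU (h : Psi B ψ) {x : Pt q F} (hx : x.1.1 ≠ 0) : ψ (B.U x) = 0 := by
  apply h.zero
  intro w
  have h2 := two_ne q (F := F)
  have hs := sg_ne (q := q) hx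
  let y : Pt q F := vv (w.1 / (2 * sg q x.1.1))
  have : zz w * x = y * x * y⁻¹ := by
    rw [eq_mul_inv_iff_mul_eq]
    apply Pt.ext
    · simp [y]; ring
    · simp [y, sg_two, w.2]; field_simp; ring
  rw [← _root_.map_mul, this, _root_.map_mul, _root_.map_mul, map_inv, h.conj]

theorem D_zz (B : BG q F G) (t : Fˣ) (z : Zt q F) (u : Fˣ) :
    ∃ w : Zt q F, w.1 = nm q (t : F) * z.1 ∧
      B.D t * (B.U (zz z) * B.D u) * (B.D t)⁻¹ = B.U (zz w) * B.D u := by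
  refine ⟨⟨nm q (t : F) * z.1, ?_⟩, rfl, ?_⟩
  · rw [_root_.map_mul, sg_nm, z.2]; ring
  · rw [← mul_assoc, B.conj, mul_assoc, mul_assoc, ← _root_.map_inv, ← _root_.map_mul,
      ← _root_.map_mul, mul_comm u, mul_inv_cancel_left]
    congr 2
    apply Pt.ext <;> simp

theorem Psi.val_const (h : Psi B ψ) (u : Fˣ) (z w : Zt q F) (hz : z.1 ≠ 0) (hw : w.1 ≠ 0) :
    ψ (B.U (zz z) * B.D u) = ψ (B.U (zz w) * B.D u) := by
  obtain ⟨t, ht⟩ := exists_nm q (x := w.1 / z.1) (div_ne_zero hw hz) (by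
    rw [map_div₀, z.2, w.2, neg_div_neg_eq])
  obtain ⟨w', h1, h2⟩ := D_zz B t z u
  have : w' = w := by
    apply Subtype.ext; rw [h1, ht]; field_simp
  rw [← this, ← h2, h.conj]

theorem Psi.val_D (h : Psi B ψ) (u : Fˣ) (z : Zt q F) (hz : z.1 ≠ 0) :
    (q - 1) * ψ (B.U (zz z) * B.D u) = - ψ (B.D u) := by
  have h1 := zt_sum (fun w => ψ (B.U (zz w) * B.D u)) (ψ (B.U (zz z) * B.D u)) (fun w hw =>
    h.val_const u w z hw hz)
  rw [h.zsum] at h1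
  simp only [zz_z0, _root_.map_one, one_mul] at h1
  linear_combination -h1

theorem Psi.val_z (h : Psi B ψ) (z : Zt q F) (hz : z.1 ≠ 0) : ψ (B.U (zz z)) = -q := by
  have h1 := h.val_D 1 z hz
  rw [_root_.map_one, mul_one, h.one] at h1
  have hq : (q : ℚ) - 1 ≠ 0 := by
    have : (3 : ℚ) ≤ q := by exact_mod_cast q_ge q F
    linarith
  apply mul_left_cancel₀ hq
  linear_combination h1

theorem Psi.val_N (h : Psi B ψ) {t : Fˣ} (ht : nm q (t : F) ≠ 1) (x : Pt q F) :
    ψ (B.U x * B.D t) = 0 := by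
  apply h.zero
  intro w
  have hn : (1 - nm q (t : F)) ≠ 0 := sub_ne_zero.mpr (Ne.symm ht)
  let v : Zt q F := ⟨w.1 / (1 - nm q (t : F)), by
    rw [map_div₀, w.2, map_sub, sg_nm, _root_.map_one]; ring⟩
  have : zz w * x = zz v * (x * act t (zz v)⁻¹) := by
    apply Pt.ext
    · simp
    · simp [v, w.2, sg_nm]; field_simp; ring
  have h2 : B.U (zz w) * (B.U x * B.D t) = B.U (zz v) * (B.U x * B.D t) * (B.U (zz v))⁻¹ := by
    rw [← mul_assoc, ← _root_.map_mul, this, _root_.map_mul, _root_.map_mul]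
    simp only [mul_assoc]
    rw [← B.conj, map_inv]
  rw [h2, h.conj]

theorem Psi.val_M (h : Psi B ψ) {t : Fˣ} (ht : ss q t = 1) (x : Pt q F) :
    ψ (B.U x * B.D t) = ψ (B.U x) := h.triv t ht _

theorem val_tw (B : BG q F G) {t : Fˣ} (ht : ss q t ≠ 1) (x : Pt q F) :
    ∃ z : Zt q F, ∀ ψ : G → ℚ, Psi B ψ → ψ (B.U x * B.D t) = ψ (B.U (zz z) * B.D t) := by
  obtain ⟨⟨a, z⟩, rfl⟩ := (twist_bij ht).2 x
  exact ⟨z, fun ψ h => by simp only [B.twist', h.conj]⟩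

end Psi

end Paper

end

noncomputable section
open Matrix

namespace Paper

set_option linter.unusedSectionVars false

section Psi2

variable {q : ℕ} {F : Type} [Field F] [Fintype F] [hS : Su q F] [DecidableEq F]
variable {G : Type} [Group G] [Fintype G]
variable {B : BG q F G} {ψ : G → ℚ}

theorem sum_supp (f : Pt q F → ℚ) (hf : ∀ x : Pt q F, x.1.1 ≠ 0 → f x = 0) :
    ∑ x, f x = ∑ z, f (zz z) := by
  rw [← Fintype.sum_equiv (ptEquiv (q := q) (F := F)) _ f (fun _ => rfl), Fintype.sum_prod_type,
    Finset.sum_eq_single 0]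
  · refine Finset.sum_congr rfl fun z _ => ?_
    congr 1
    apply Pt.ext <;> simp [ptEquiv, nm]
  · intro a _ ha
    refine Finset.sum_eq_zero fun z _ => ?_
    apply hf
    simpa [ptEquiv] using ha
  · simp

theorem q_sub (q : ℕ) (F : Type) [Field F] [Fintype F] [Su q F] : (q : ℚ) - 1 ≠ 0 := by
  have : (3 : ℚ) ≤ q := by exact_mod_cast q_ge q F
  linarith

theorem Psi.sq_M (h : Psi B ψ) {t : Fˣ} (ht : ss q t = 1) :
    ∑ x, ψ (B.U x * B.D t) ^ 2 = q ^ 3 * (q - 1) := by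
  simp only [h.val_M ht]
  rw [sum_supp _ (fun x hx => by rw [h.valU hx]; norm_num),
    zt_sum _ ((q : ℚ) ^ 2) (fun z hz => by rw [h.val_z z hz]; ring), zz_z0, _root_.map_one, h.one]
  ring

theorem Psi.sq_C (h : Psi B ψ) {t : Fˣ} (ht : ss q t ≠ 1) :
    ∑ x, ψ (B.U x * B.D t) ^ 2 = q ^ 3 * (q - 1) * (ψ (B.D t) / (q - 1)) ^ 2 := by
  have hq := q_sub q F
  rw [twist_sum B ht (fun g => ψ g ^ 2) (fun g k => by rw [h.conj]),
    zt_sum _ ((ψ (B.D t) / (q - 1)) ^ 2) (fun z hz => by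
      have := h.val_D t z hz
      have h2 : ψ (B.U (zz z) * B.D t) = - (ψ (B.D t) / (q - 1)) := by
        field_simp; linear_combination this
      rw [h2]; ring), zz_z0, _root_.map_one, one_mul]
  field_simp
  ring

theorem sq_UD (B : BG q F G) (x : Pt q F) (t : Fˣ) :
    (B.U x * B.D t) * (B.U x * B.D t) = B.U (x * act t x) * B.D (t * t) := by
  rw [_root_.map_mul, _root_.map_mul]
  calc _ = B.U x * (B.D t * B.U x) * B.D t := by simp only [mul_assoc]
    _ = _ := by rw [B.conj]; simp only [mul_assoc]

theorem nm_sq (t : Fˣ) : nm q ((t * t : Fˣ) : F) = nm q (t : F) ^ 2 := by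
  rw [Units.val_mul, nm_mul, pow_two]

/-- Doubling on `Zt`. -/
theorem zsum_double (h : Psi B ψ) (g : G) :
    ∑ z : Zt q F, ψ (B.U (zz z * zz z) * g) = 0 := by
  have h2 := two_ne q (F := F)
  rw [← h.zsum g]
  let f : Zt q F → Zt q F := fun z => ⟨z.1 + z.1, by rw [map_add, z.2]; ring⟩
  have hf : Function.Bijective f := by
    rw [Fintype.bijective_iff_injective_and_card]
    refine ⟨?_, rfl⟩
    intro z w hzw
    have : z.1 + z.1 = w.1 + w.1 := congrArg Subtype.val hzw
    apply Subtype.ext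
    apply mul_left_cancel₀ h2
    linear_combination this
  refine Fintype.sum_equiv (Equiv.ofBijective f hf) _ _ fun z => ?_
  congr 3
  apply Pt.ext <;> simp [f]

theorem Psi.fs_other (h : Psi B ψ) {t : Fˣ} (h1 : nm q (t : F) ≠ -1) :
    ∑ x, ψ ((B.U x * B.D t) * (B.U x * B.D t)) = 0 := by
  by_cases hn : nm q (t : F) = 1
  · by_cases ht : ss q t = 1
    · have ht2 : ss q (t * t) = 1 := by rw [ss_mul, ht, one_mul]
      simp only [sq_UD, h.val_M ht2, act_triv ht]
      rw [sum_supp]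
      · have := zsum_double h (1 : G)
        simpa using this
      · intro x hx
        apply h.valU
        have h2 := two_ne q (F := F)
        rw [Pt.mul_a]
        intro h0
        apply hx
        apply (mul_eq_zero.mp (show (2 : F) * x.1.1 = 0 by linear_combination h0)).resolve_left h2
    · rw [twist_sum B ht (fun g => ψ (g * g)) (fun g k => by
        rw [← h.conj (g * g) k]; congr 1; group)]
      simp only [sq_UD]
      have : ∀ z : Zt q F, act t (zz z) = zz z := by
        intro z; apply Pt.ext <;> simp [hn]
      simp only [this, zsum_double h, mul_zero]
  · refine Finset.sum_eq_zero fun x _ => ?_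
    rw [sq_UD, h.val_N]
    rw [nm_sq]
    intro h2
    rw [pow_two] at h2
    rcases mul_self_eq_one_iff.mp h2 with h3 | h3
    · exact hn h3
    · exact h1 h3

theorem ss_ne_of_nm {t : Fˣ} (h1 : nm q (t : F) = -1) : ss q t ≠ 1 := by
  intro h
  have := ss_nm h
  rw [h1] at this
  exact two_ne q (F := F) (by linear_combination -this)

theorem Psi.fs_neg (h : Psi B ψ) {t : Fˣ} (h1 : nm q (t : F) = -1) :
    ∑ x, ψ ((B.U x * B.D t) * (B.U x * B.D t)) = q ^ 3 * ψ (B.D (t * t)) := by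
  rw [twist_sum B (ss_ne_of_nm h1) (fun g => ψ (g * g)) (fun g k => by
        rw [← h.conj (g * g) k]; congr 1; group)]
  have : ∀ z : Zt q F, zz z * act t (zz z) = 1 := by
    intro z; apply Pt.ext <;> simp [h1]
  simp only [sq_UD, this, _root_.map_one, one_mul, Finset.sum_const, Finset.card_univ, card_Zt,
    nsmul_eq_mul]
  ring

variable (q F) in
/-- Norm-one torus elements. -/
def Cs : Finset Fˣ := Finset.univ.filter fun t : Fˣ => nm q (t : F) = 1

variable (q F) in
/-- Norm minus one torus elements. -/
def Cn : Finset Fˣ := Finset.univ.filter fun t : Fˣ => nm q (t : F) = -1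

variable (q F) in
/-- Central torus elements. -/
def Ms : Finset Fˣ := Finset.univ.filter fun t : Fˣ => ss q t = 1

theorem Ms_sub : Ms q F ⊆ Cs q F := by
  intro t ht
  simp only [Ms, Cs, Finset.mem_filter, Finset.mem_univ, true_and] at ht ⊢
  exact ss_nm ht

theorem Psi.eq1 (h : Psi B ψ) :
    ∑ t ∈ Cs q F \ Ms q F, (ψ (B.D t) / (q - 1)) ^ 2 = (q + 1 - (Ms q F).card : ℚ) := by
  have hq := q_sub q F
  have hq0 : (q : ℚ) ≠ 0 := by have := q_ge q F; positivity
  have h1 := h.norm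
  rw [B.sum, B.card, ← Finset.sum_subset (Finset.subset_univ (Cs q F)),
    ← Finset.sum_sdiff (Ms_sub (q := q) (F := F)),
    Finset.sum_congr rfl (g := fun t => (q : ℚ) ^ 3 * (q - 1) * (ψ (B.D t) / (q - 1)) ^ 2),
    Finset.sum_congr (s₁ := Ms q F) rfl (g := fun t => (q : ℚ) ^ 3 * (q - 1)),
    ← Finset.mul_sum, Finset.sum_const, nsmul_eq_mul] at h1
  · apply mul_left_cancel₀ (mul_ne_zero (pow_ne_zero 3 hq0) hq)
    linear_combination h1
  · intro t ht
    exact h.sq_M (Finset.mem_filter.mp ht).2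
  · intro t ht
    rw [Finset.mem_sdiff] at ht
    exact h.sq_C (fun h0 => ht.2 (Finset.mem_filter.mpr ⟨Finset.mem_univ _, h0⟩))
  · intro t _ ht
    refine Finset.sum_eq_zero fun x _ => ?_
    rw [h.val_N]
    · norm_num
    · exact fun h0 => ht (Finset.mem_filter.mpr ⟨Finset.mem_univ _, h0⟩)

theorem Psi.eq2 (h : Psi B ψ) :
    ∑ t ∈ Cn q F, (ψ (B.D (t * t)) / (q - 1)) = q + 1 := by
  have hq := q_sub q F
  have hq0 : (q : ℚ) ≠ 0 := by have := q_ge q F; positivity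
  have h1 := h.fs
  rw [B.sum, B.card, ← Finset.sum_subset (Finset.subset_univ (Cn q F)),
    Finset.sum_congr rfl (g := fun t => (q : ℚ) ^ 3 * ψ (B.D (t * t))), ← Finset.mul_sum] at h1
  · rw [← Finset.sum_div]
    have := mul_left_cancel₀ (pow_ne_zero 3 hq0) h1
    rw [this]; field_simp; ring
  · intro t ht
    exact h.fs_neg (Finset.mem_filter.mp ht).2
  · intro t _ ht
    exact h.fs_other (fun h0 => ht (Finset.mem_filter.mpr ⟨Finset.mem_univ _, h0⟩))

theorem Psi.valDM (h : Psi B ψ) {t : Fˣ} (ht : t ∈ Ms q F) : ψ (B.D t) / (q - 1) = q := by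
  have hq := q_sub q F
  have := h.val_M (Finset.mem_filter.mp ht).2 1
  rw [_root_.map_one, one_mul, h.one] at this
  rw [this]; field_simp

theorem Psi.eq3 (h : Psi B ψ) : ∃ r : ℕ,
    ∑ t ∈ Cs q F \ Ms q F, ψ (B.D t) / (q - 1) = (q + 1) * r - (Ms q F).card * q := by
  have hq := q_sub q F
  obtain ⟨r, hr⟩ := h.tor
  refine ⟨r, ?_⟩
  rw [← Finset.sum_subset (Finset.subset_univ (Cs q F))] at hr
  · have h2 : ∑ t ∈ Cs q F, ψ (B.D t) / (q - 1) = (q + 1) * r := by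
      rw [← Finset.sum_div, hr]; field_simp; ring
    rw [← Finset.sum_sdiff (Ms_sub (q := q) (F := F)), Finset.sum_congr (s₁ := Ms q F) rfl
      (fun t ht => h.valDM ht), Finset.sum_const, nsmul_eq_mul] at h2
    linear_combination h2
  · intro t _ ht
    have := h.val_N (t := t) (fun h0 => ht (Finset.mem_filter.mpr ⟨Finset.mem_univ _, h0⟩)) 1
    simpa using this

theorem M_cube {t : Fˣ} (h : ss q t = 1) : t ^ 3 = 1 := by
  have h0 := t.ne_zero
  have h1 : sg q (t : F) ^ 2 = t := by
    rw [ss] at h; field_simp at h; exact h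
  have h2 : (t : F) ^ 2 = sg q (t : F) := by
    conv_rhs => rw [← h1]
    rw [map_pow, sg_sg]
  ext
  push_cast
  apply mul_left_cancel₀ h0
  rw [← h2] at h1
  linear_combination h1

variable (q F) in
/-- The nonsquares of the norm one group. -/
def Qs : Finset Fˣ := Finset.univ.filter fun t : Fˣ => t ^ ((q + 1) / 2) = -1

theorem half_q (q : ℕ) (F : Type) [Field F] [Fintype F] [hS : Su q F] :
    (q + 1) / 2 * 2 = q + 1 := by
  obtain ⟨m, hm⟩ := hS.odd; omega

theorem neg_one_ne (q : ℕ) (F : Type) [Field F] [Fintype F] [hS : Su q F] :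
    (-1 : Fˣ) ≠ 1 := by
  intro h
  have := congrArg Units.val h
  push_cast at this
  exact two_ne q (F := F) (by linear_combination -this)

theorem Cs_pow (t : Fˣ) : nm q (t : F) = ((t ^ (q + 1) : Fˣ) : F) := by
  rw [nm_eq_pow]; push_cast; rfl

theorem mem_Cs (t : Fˣ) : t ∈ Cs q F ↔ t ^ (q + 1) = 1 := by
  simp only [Cs, Finset.mem_filter, Finset.mem_univ, true_and, Cs_pow, Units.ext_iff, Units.val_one]

theorem mem_Cn (t : Fˣ) : t ∈ Cn q F ↔ t ^ (q + 1) = -1 := by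
  simp only [Cn, Finset.mem_filter, Finset.mem_univ, true_and, Cs_pow, Units.ext_iff, Units.val_one,
    Units.val_neg]

theorem Qs_sub : Qs q F ⊆ Cs q F \ Ms q F := by
  intro t ht
  have h1 : t ^ ((q + 1) / 2) = -1 := (Finset.mem_filter.mp ht).2
  rw [Finset.mem_sdiff, mem_Cs]
  constructor
  · rw [← half_q q F, pow_mul, h1]; simp
  · intro hM
    have h3 := M_cube (Finset.mem_filter.mp hM).2
    apply neg_one_ne q F
    calc (-1 : Fˣ) = (t ^ ((q + 1) / 2)) ^ 3 := by rw [h1]; ext; push_cast; norm_num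
      _ = (t ^ 3) ^ ((q + 1) / 2) := by rw [← pow_mul, ← pow_mul, mul_comm]
      _ = 1 := by rw [h3, one_pow]

theorem Cn_sum (f : Fˣ → ℚ) : ∑ t ∈ Cn q F, f (t * t) = 2 * ∑ c ∈ Qs q F, f c := by
  have hmap : ∀ t ∈ Cn q F, t * t ∈ Qs q F := by
    intro t ht
    rw [mem_Cn] at ht
    rw [Qs, Finset.mem_filter]
    refine ⟨Finset.mem_univ _, ?_⟩
    rw [← pow_two, ← pow_mul, mul_comm, half_q q F, ht]
  rw [← Finset.sum_fiberwise_of_maps_to hmap, Finset.mul_sum]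
  refine Finset.sum_congr rfl fun c hc => ?_
  have hc1 : c ^ ((q + 1) / 2) = -1 := (Finset.mem_filter.mp hc).2
  -- a square root
  obtain ⟨s, hs⟩ : ∃ s : Fˣ, s * s = c := by
    have hch : ringChar F ≠ 2 := by
      intro h
      have h2 : ((2 : ℕ) : F) = 0 := by rw [← h]; exact ringChar.Nat.cast_ringChar
      exact two_ne q (F := F) (by exact_mod_cast h2)
    have hsq : IsSquare (c : F) := by
      rw [FiniteField.isSquare_iff hch c.ne_zero, hS.card]
      have h4 : q ^ 2 / 2 = (q + 1) / 2 * (q - 1) := by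
        obtain ⟨m, hm⟩ := hS.odd
        subst hm
        have e1 : (2 * m + 1 + 1) / 2 = m + 1 := by omega
        rw [e1, Nat.add_sub_cancel]
        have : (2 * m + 1) ^ 2 = 2 * ((m + 1) * (2 * m)) + 1 := by ring
        omega
      have h5 : Even (q - 1) := by
        obtain ⟨m, hm⟩ := hS.odd; exact ⟨m, by omega⟩
      rw [h4, pow_mul, ← Units.val_pow_eq_pow_val, hc1]
      push_cast
      exact h5.neg_one_pow
    obtain ⟨r, hr⟩ := hsq
    have hr0 : r ≠ 0 := by rintro rfl; exact c.ne_zero (by simpa using hr)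
    exact ⟨Units.mk0 r hr0, by ext; simpa using hr.symm⟩
  have hset : (Cn q F).filter (fun t => t * t = c) = {s, -s} := by
    ext t
    simp only [Finset.mem_filter, Finset.mem_insert, Finset.mem_singleton, mem_Cn]
    constructor
    · rintro ⟨_, h⟩
      have : (t : F) * t = s * s := by
        rw [← Units.val_mul, ← Units.val_mul, h, hs]
      rcases mul_self_eq_mul_self_iff.mp this with h | h
      · left; exact Units.ext h
      · right; exact Units.ext (by simpa using h)
    · have hs2 : s ^ (q + 1) = -1 := by
        rw [← hc1, ← hs, ← pow_two, ← pow_mul, mul_comm 2, half_q q F]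
      have hev : Even (q + 1) := by
        obtain ⟨m, hm⟩ := hS.odd; exact ⟨m + 1, by omega⟩
      rintro (rfl | rfl)
      · exact ⟨hs2, hs⟩
      · exact ⟨by rw [hev.neg_pow, hs2], by rw [neg_mul_neg, hs]⟩
  have hne : s ≠ -s := by
    intro h
    have := congrArg Units.val h
    push_cast at this
    have h2 : (2 : F) * s = 0 := by linear_combination this
    rcases mul_eq_zero.mp h2 with h3 | h3
    · exact two_ne q (F := F) h3
    · exact s.ne_zero h3
  rw [Finset.sum_congr rfl (g := fun _ => f c) (fun t ht => by rw [(Finset.mem_filter.mp ht).2]),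
    Finset.sum_const, hset, Finset.card_pair hne, nsmul_eq_mul]
  norm_num

theorem Qs_card : 2 * ((Qs q F).card : ℚ) = q + 1 := by
  have h := Cn_sum (q := q) (F := F) (fun _ => 1)
  rw [Finset.sum_const, Finset.sum_const, Cn, card_Cm] at h
  simp at h
  linarith

/-- The values on the norm one torus. -/
theorem Psi.valC (h : Psi B ψ) {t : Fˣ} (ht : t ∈ Cs q F \ Ms q F) :
    ψ (B.D t) / (q - 1) = if t ∈ Qs q F then 1 else -1 := by
  obtain ⟨r, h3⟩ := h.eq3
  have h1 := h.eq1
  have h2 := h.eq2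
  rw [Cn_sum (fun t => ψ (B.D t) / (q - 1))] at h2
  set y : Fˣ → ℚ := fun t => ψ (B.D t) / (q - 1) with hy
  set S := Cs q F \ Ms q F with hSd
  set d := (Ms q F).card with hd
  have hd1 : 1 ≤ d := by
    rw [hd]; apply Finset.card_pos.mpr
    exact ⟨1, Finset.mem_filter.mpr ⟨Finset.mem_univ _, ss_one⟩⟩
  have hSc : (S.card : ℚ) = q + 1 - d := by
    rw [hSd, Finset.card_sdiff_of_subset Ms_sub, Nat.cast_sub (Finset.card_le_card Ms_sub)]
    rw [Cs, card_C]; push_cast; rfl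
  have hq0 : (0 : ℚ) < q + 1 := by positivity
  have e0 : ∑ t ∈ S, (if t ∈ Qs q F then (1 : ℚ) else 0) = (Qs q F).card := by
    rw [Finset.sum_ite_mem, Finset.inter_eq_right.mpr Qs_sub]; simp
  have e1 : ∑ t ∈ S, (if t ∈ Qs q F then y t else 0) = ∑ t ∈ Qs q F, y t := by
    rw [Finset.sum_ite_mem, Finset.inter_eq_right.mpr Qs_sub]
  have k1 : ∑ t ∈ S, (y t - if t ∈ Qs q F then 1 else -1) ^ 2 = 2 * (q + 1) * (r - d : ℚ) := by
    have : ∀ t ∈ S, (y t - if t ∈ Qs q F then 1 else -1) ^ 2 =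
        y t ^ 2 + 2 * y t + 1 - 4 * (if t ∈ Qs q F then y t else 0) := by
      intro t _; split_ifs <;> ring
    rw [Finset.sum_congr rfl this, Finset.sum_sub_distrib, Finset.sum_add_distrib,
      Finset.sum_add_distrib, ← Finset.mul_sum, ← Finset.mul_sum, e1, h1, h3, Finset.sum_const,
      nsmul_eq_mul, hSc]
    linear_combination -2 * h2
  have k2 : ∑ t ∈ S, (y t - 1) ^ 2 = 2 * (q + 1) * (1 + d - r : ℚ) - 4 * d := by
    have : ∀ t ∈ S, (y t - 1) ^ 2 = y t ^ 2 - 2 * y t + 1 := by intro t _; ring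
    rw [Finset.sum_congr rfl this, Finset.sum_add_distrib, Finset.sum_sub_distrib,
      ← Finset.mul_sum, h1, h3, Finset.sum_const, nsmul_eq_mul, hSc]
    ring
  have n1 : 0 ≤ ∑ t ∈ S, (y t - if t ∈ Qs q F then 1 else -1) ^ 2 :=
    Finset.sum_nonneg fun _ _ => sq_nonneg _
  have n2 : 0 ≤ ∑ t ∈ S, (y t - 1) ^ 2 := Finset.sum_nonneg fun _ _ => sq_nonneg _
  rw [k2] at n2
  have hd1' : (1 : ℚ) ≤ d := by exact_mod_cast hd1
  have m1 : (0 : ℚ) ≤ r - d := by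
    rw [k1] at n1
    by_contra hneg
    push Not at hneg
    nlinarith
  have m2 : (r : ℚ) < d + 1 := by
    by_contra hneg
    push Not at hneg
    nlinarith
  have m3 : r = d := by
    have a1 : d ≤ r := by
      have : (d : ℚ) ≤ r := by linarith
      exact_mod_cast this
    have a2 : r < d + 1 := by exact_mod_cast m2
    omega
  rw [m3, sub_self, mul_zero] at k1
  have := (Finset.sum_eq_zero_iff_of_nonneg (fun _ _ => sq_nonneg _)).mp k1 t ht
  have := pow_eq_zero_iff (two_ne_zero) |>.mp this
  exact sub_eq_zero.mp this

/-- Uniqueness. -/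
theorem Psi.unique {ψ' : G → ℚ} (h : Psi B ψ) (h' : Psi B ψ') : ψ = ψ' := by
  have hq := q_sub q F
  have hD : ∀ t ∈ Cs q F \ Ms q F, ψ (B.D t) = ψ' (B.D t) := by
    intro t ht
    have := (h.valC ht).trans (h'.valC ht).symm
    field_simp at this
    exact this
  funext g
  obtain ⟨⟨x, t⟩, rfl⟩ := B.bij.2 g
  simp only
  by_cases hn : nm q (t : F) = 1
  · by_cases hs : ss q t = 1
    · rw [h.val_M hs, h'.val_M hs]
      by_cases ha : x.1.1 = 0
      · have hx : x = zz ⟨x.1.2, by have := x.2; rw [ha] at this; simp [nm] at this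
                                    linear_combination this⟩ := Pt.ext ha rfl
        by_cases hb : x.1.2 = 0
        · have : x = 1 := Pt.ext ha hb
          rw [this, _root_.map_one, h.one, h'.one]
        · rw [hx, h.val_z _ hb, h'.val_z _ hb]
      · rw [h.valU ha, h'.valU ha]
    · have ht : t ∈ Cs q F \ Ms q F := by
        rw [Finset.mem_sdiff]
        exact ⟨Finset.mem_filter.mpr ⟨Finset.mem_univ _, hn⟩,
          fun h0 => hs (Finset.mem_filter.mp h0).2⟩
      obtain ⟨z, hz⟩ := val_tw B hs x
      rw [hz ψ h, hz ψ' h']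
      by_cases hb : z.1 = 0
      · have : zz z = 1 := Pt.ext rfl hb
        rw [this, _root_.map_one, one_mul, hD t ht]
      · apply mul_left_cancel₀ hq
        rw [h.val_D t z hb, h'.val_D t z hb, hD t ht]
  · rw [h.val_N hn, h'.val_N hn]

end Psi2

end Paper

end

noncomputable section
open Matrix

namespace Paper

set_option linter.unusedSectionVars false

section PsiOf

variable {q : ℕ} {F : Type} [Field F] [Fintype F] [hS : Su q F] [DecidableEq F]
variable {G : Type} [Group G] [Fintype G] {n : ℕ}

/-- Central torus elements are central. -/
theorem BG.central (B : BG q F G) {t : Fˣ} (ht : ss q t = 1) (g : G) : g * B.D t = B.D t * g := by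
  obtain ⟨⟨x, u⟩, rfl⟩ := B.bij.2 g
  simp only
  rw [mul_assoc, ← _root_.map_mul, mul_comm u t, _root_.map_mul, ← mul_assoc, ← mul_assoc, B.conj,
    act_triv ht]

theorem card_Ms_le : (Ms q F).card ≤ 3 := by
  have := IsCyclic.card_pow_eq_one_le (α := Fˣ) (n := 3) (by norm_num)
  refine le_trans (Finset.card_le_card ?_) this
  intro t ht
  rw [Finset.mem_filter]
  exact ⟨Finset.mem_univ _, M_cube (Finset.mem_filter.mp ht).2⟩

theorem scalar_M (B : BG q F G) {ρ : G →* GL (Fin n) ℂ} (hρ : IsIrredRep ρ)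
    (hr : IsRationalChar (charOf ρ)) {t : Fˣ} (ht : ss q t = 1) : mx ρ (B.D t) = 1 := by
  have hn : (n : ℂ) ≠ 0 := by exact_mod_cast hρ.1.ne'
  obtain ⟨c, hc⟩ := schur hρ (mx ρ (B.D t)) (fun g => by
    rw [← mx_mul, ← mx_mul, B.central ht])
  have h3 : c ^ 3 = 1 := by
    have h1 : mx ρ (B.D t ^ 3) = mx ρ (B.D t) ^ 3 := by simp [mx]
    rw [← map_pow, M_cube ht, _root_.map_one, mx_one, hc, smul_pow, one_pow] at h1
    have := congrArg Matrix.trace h1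
    simp only [trace_smul, trace_one, Fintype.card_fin, smul_eq_mul] at this
    exact mul_right_cancel₀ hn (by rw [← this, one_mul])
  obtain ⟨r, hr⟩ := hr (B.D t)
  rw [charOf_apply, hc] at hr
  simp at hr
  have hcr : c = ((r / n : ℚ) : ℂ) := by
    push_cast; field_simp; linear_combination hr
  have h4 : (r / n : ℚ) ^ 3 = 1 := by
    rw [hcr] at h3; exact_mod_cast h3
  have h5 : (r / n : ℚ) = 1 := by
    have : (r / n : ℚ) ^ 3 = 1 ^ 3 := by rw [h4, one_pow]
    exact (Odd.strictMono_pow (by decide : Odd 3)).injective this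
  rw [hc, hcr, h5]; simp

theorem zero_sum (B : BG q F G) {ρ : G →* GL (Fin n) ℂ} (hρ : IsIrredRep ρ)
    (hr : IsRationalChar (charOf ρ)) (hn : n = q ^ 2 - q) :
    ∑ z : Zt q F, mx ρ (B.U (zz z)) = 0 := by
  have h3 := q_ge q F
  have hn' : n = q * (q - 1) := by rw [hn, Nat.mul_sub, pow_two, mul_one]
  have hn2 : 2 ≤ n := by rw [hn']; obtain ⟨m, rfl⟩ : ∃ m, q = m + 3 := ⟨q - 3, by omega⟩
                         have : m + 3 - 1 = m + 2 := by omega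
                         rw [this]; nlinarith
  have hUf : ∀ w : Pt q F, ∃ e : Equiv.Perm (Pt q F), ∀ z, B.U w * B.U z = B.U (e z) := by
    intro w; exact ⟨Equiv.mulLeft w, fun z => by simp⟩
  have hUN : ∀ g : G, ∃ e : Equiv.Perm (Pt q F), ∀ z, g * B.U z = B.U (e z) * g := by
    intro g
    obtain ⟨⟨x, t⟩, rfl⟩ := B.bij.2 g
    have hb : Function.Bijective (fun y : Pt q F => x * act t y * x⁻¹) := by
      rw [Fintype.bijective_iff_injective_and_card]
      refine ⟨?_, rfl⟩
      intro y y' h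
      have h1 := mul_left_cancel (mul_right_cancel h)
      have h2 := congrArg (act t⁻¹) h1
      rwa [← act_mul, ← act_mul, inv_mul_cancel, act_one, act_one] at h2
    refine ⟨Equiv.ofBijective _ hb, fun y => ?_⟩
    simp only [Equiv.ofBijective_apply, _root_.map_mul, map_inv]
    rw [mul_assoc, B.conj]; group
  have hZf : ∀ w : Zt q F, ∃ e : Equiv.Perm (Zt q F), ∀ z, B.U (zz w) * B.U (zz z) = B.U (zz (e z)) := by
    intro w
    let e : Equiv.Perm (Zt q F) :=
      { toFun := fun z => ⟨w.1 + z.1, by rw [map_add, w.2, z.2]; ring⟩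
        invFun := fun z => ⟨-w.1 + z.1, by rw [map_add, map_neg, w.2, z.2]; ring⟩
        left_inv := fun z => by ext; simp
        right_inv := fun z => by ext; simp }
    refine ⟨e, fun z => ?_⟩
    rw [← _root_.map_mul]; congr 1
    apply Pt.ext <;> simp [e]
  have hZN : ∀ g : G, ∃ e : Equiv.Perm (Zt q F), ∀ z, g * B.U (zz z) = B.U (zz (e z)) * g := by
    intro g
    obtain ⟨⟨x, t⟩, rfl⟩ := B.bij.2 g
    have hN : nm q (t : F) ≠ 0 := nm_ne q t.ne_zero
    let e : Equiv.Perm (Zt q F) :=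
      { toFun := fun z => ⟨nm q (t : F) * z.1, by rw [_root_.map_mul, sg_nm, z.2]; ring⟩
        invFun := fun z => ⟨(nm q (t : F))⁻¹ * z.1, by
          rw [_root_.map_mul, map_inv₀, sg_nm, z.2]; ring⟩
        left_inv := fun z => by ext; simp [hN]
        right_inv := fun z => by ext; simp [hN] }
    refine ⟨e, fun z => ?_⟩
    simp only
    have h1 : act t (zz z) = zz (e z) := by apply Pt.ext <;> simp [e]
    rw [mul_assoc, B.conj, h1, ← mul_assoc, ← mul_assoc, ← _root_.map_mul, ← _root_.map_mul, zz_comm]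
  rcases normal_sum hρ (fun z : Zt q F => B.U (zz z)) hZf hZN with h | hZ
  · exact h
  · exfalso
    rcases normal_sum hρ (fun x : Pt q F => B.U x) hUf hUN with hU | hU
    · have key : ∀ t : Fˣ, ss q t ≠ 1 → charOf ρ (B.D t) = 0 := by
        intro t ht
        have h1 : ∀ x : Pt q F, (mx ρ (B.U x) * mx ρ (B.D t)).trace = charOf ρ (B.D t) := by
          intro x
          obtain ⟨⟨a, z⟩, rfl⟩ := (twist_bij ht).2 x
          simp only
          rw [← mx_mul, B.twist', ← charOf_apply, charOf_conj, charOf_apply, mx_mul, hZ, one_mul,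
            charOf_apply]
        have h2 : ((∑ x, mx ρ (B.U x)) * mx ρ (B.D t)).trace = 0 := by rw [hU]; simp
        rw [Finset.sum_mul, trace_sum] at h2
        simp only [h1, Finset.sum_const, Finset.card_univ, card_Pt, nsmul_eq_mul] at h2
        have hq : ((q ^ 3 : ℕ) : ℂ) ≠ 0 := by
          have : q ^ 3 ≠ 0 := by positivity
          exact_mod_cast this
        exact (mul_eq_zero.mp h2).resolve_left hq
      obtain ⟨r, hr'⟩ := fixed_nat (fun t : Fˣ => mx ρ (B.D t)) (fun w => ⟨Equiv.mulLeft w,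
        fun z => by simp only [Equiv.coe_mulLeft, _root_.map_mul, mx_mul]⟩)
      rw [← Finset.sum_subset (Finset.subset_univ (Ms q F)), Finset.sum_congr rfl
        (g := fun _ => (n : ℂ))] at hr'
      · rw [Finset.sum_const, nsmul_eq_mul] at hr'
        have h5 : (Ms q F).card * n = Fintype.card Fˣ * r := by exact_mod_cast hr'
        rw [← Nat.card_eq_fintype_card, card_units' q, hn'] at h5
        have h6 : (Ms q F).card * q = (q + 1) * r := by
          apply Nat.eq_of_mul_eq_mul_right (show 0 < q - 1 by omega)
          calc _ = (Ms q F).card * (q * (q - 1)) := by ring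
            _ = _ := h5
            _ = _ := by ring
        have h7 : (q + 1) ∣ (Ms q F).card :=
          (Nat.Coprime.dvd_mul_right (by simp)).mp ⟨r, h6⟩
        have h8 : 0 < (Ms q F).card := Finset.card_pos.mpr
          ⟨1, Finset.mem_filter.mpr ⟨Finset.mem_univ _, ss_one⟩⟩
        have h9 := Nat.le_of_dvd h8 h7
        have := card_Ms_le (q := q) (F := F)
        omega
      · intro t ht
        rw [scalar_M B hρ hr (Finset.mem_filter.mp ht).2]; simp
      · intro t _ ht
        exact key t (fun h0 => ht (Finset.mem_filter.mpr ⟨Finset.mem_univ _, h0⟩))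
    · have hcomm : ∀ g h : G, mx ρ g * mx ρ h = mx ρ h * mx ρ g := by
        intro g h
        obtain ⟨⟨x, t⟩, rfl⟩ := B.bij.2 g
        obtain ⟨⟨y, u⟩, rfl⟩ := B.bij.2 h
        simp only [mx_mul, hU, one_mul]
        rw [← mx_mul, ← mx_mul, ← _root_.map_mul, ← _root_.map_mul, mul_comm]
      have hsc : ∀ g : G, charOf ρ g * charOf ρ g⁻¹ = (n : ℂ) ^ 2 := by
        intro g
        obtain ⟨c, hc⟩ := schur hρ (mx ρ g) (fun h => hcomm h g)
        obtain ⟨e, he⟩ := schur hρ (mx ρ g⁻¹) (fun h => hcomm h g⁻¹)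
        have h1 := mx_mul_inv ρ g
        rw [hc, he, smul_mul_smul_comm, one_mul] at h1
        have h2 := congrArg Matrix.trace h1
        simp only [trace_smul, trace_one, Fintype.card_fin, smul_eq_mul] at h2
        rw [charOf_apply, charOf_apply, hc, he]
        simp only [trace_smul, trace_one, Fintype.card_fin, smul_eq_mul]
        linear_combination (n : ℂ) * h2
      have h4 := char_norm hρ
      simp only [hsc, Finset.sum_const, Finset.card_univ, nsmul_eq_mul] at h4
      have h5 : Fintype.card G * n ^ 2 = Fintype.card G := by exact_mod_cast h4
      have h6 : 0 < Fintype.card G := Fintype.card_pos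
      have h7 : n ^ 2 = 1 := Nat.eq_of_mul_eq_mul_left h6 (by rw [h5, mul_one])
      nlinarith

theorem psi_of (B : BG q F G) {ρ : G →* GL (Fin n) ℂ} (hρ : IsIrredRep ρ)
    (hr : IsRationalChar (charOf ρ)) (hone : charOf ρ 1 = ((q ^ 2 - q : ℕ) : ℂ))
    (hfs : FSind (charOf ρ) = 1) :
    ∃ ψ : G → ℚ, (∀ g, charOf ρ g = ψ g) ∧ Psi B ψ := by
  have h3 := q_ge q F
  have hn : n = q ^ 2 - q := by
    rw [charOf_one] at hone; exact_mod_cast hone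
  have hz := zero_sum B hρ hr hn
  have hr0 := hr
  choose ψ hψ using hr
  refine ⟨ψ, hψ, ?_, ?_, ?_, ?_, ?_, ?_, ?_⟩
  · intro g h
    have := charOf_conj ρ g h
    rw [hψ, hψ] at this; exact_mod_cast this
  · intro g
    have h1 : ((∑ z : Zt q F, mx ρ (B.U (zz z))) * mx ρ g).trace = 0 := by rw [hz]; simp
    rw [Finset.sum_mul, trace_sum] at h1
    simp only [← mx_mul, ← charOf_apply, hψ] at h1
    exact_mod_cast h1
  · intro t ht g
    have h1 : charOf ρ (g * B.D t) = charOf ρ g := by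
      rw [charOf_apply, mx_mul, scalar_M B hρ hr0 ht, mul_one]; rfl
    rw [hψ, hψ] at h1; exact_mod_cast h1
  · have h1 := hψ 1
    rw [hone, Nat.cast_sub (by nlinarith)] at h1
    push_cast at h1
    exact_mod_cast h1.symm
  · have h1 := char_norm hρ
    have h0 : ∀ g, charOf ρ g⁻¹ = charOf ρ g := by
      intro g; rw [char_inv, hψ, map_ratCast]
    simp only [h0, hψ] at h1
    have h2 : ∑ g, ψ g * ψ g = Fintype.card G := by exact_mod_cast h1
    rw [← h2]
    exact Finset.sum_congr rfl fun g _ => pow_two _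
  · rw [FSind, finsum_eq_sum_of_fintype, Nat.card_eq_fintype_card] at hfs
    have hc : (Fintype.card G : ℂ) ≠ 0 := by exact_mod_cast Fintype.card_ne_zero
    field_simp at hfs
    simp only [hψ] at hfs
    exact_mod_cast hfs
  · obtain ⟨r, h1⟩ := fixed_nat (fun t : Fˣ => mx ρ (B.D t)) (fun w => ⟨Equiv.mulLeft w,
        fun z => by simp only [Equiv.coe_mulLeft, _root_.map_mul, mx_mul]⟩)
    refine ⟨r, ?_⟩
    simp only [← charOf_apply, hψ] at h1
    rw [Fintype.card_units, hS.card, Nat.cast_sub (by nlinarith)] at h1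
    push_cast at h1
    exact_mod_cast h1

end PsiOf

end Paper

end

noncomputable section
open Matrix

namespace Paper

set_option linter.unusedSectionVars false

section Disc

theorem det_one_add_J {ι R : Type} [Fintype ι] [DecidableEq ι] [CommRing R] :
    ((1 : Matrix ι ι R) + Matrix.of fun _ _ => (1 : R)).det = (Fintype.card ι : R) + 1 := by
  have h : (Matrix.of fun _ _ => (1 : R) : Matrix ι ι R) =
      (Matrix.of fun _ _ => (1 : R) : Matrix ι Unit R) * (Matrix.of fun _ _ => (1 : R) : Matrix Unit ι R) := by
    ext i j; simp [Matrix.mul_apply]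
  rw [h, Matrix.det_one_add_mul_comm, Matrix.det_unique]
  simp [Matrix.mul_apply]; ring

variable {A : Type} [AddCommGroup A] [Fintype A] [DecidableEq A]

theorem exists_sign (ho : Odd (Fintype.card A)) : ∃ c : A → ℤ, c 0 = 0 ∧ (∀ z, c (-z) = - c z) ∧
    ∀ z, z ≠ 0 → Odd (c z) := by
  let e := Fintype.equivFin A
  refine ⟨fun z => if e z < e (-z) then 1 else if e (-z) < e z then -1 else 0, ?_, ?_, ?_⟩
  · simp
  · intro z
    simp only [neg_neg]
    rcases lt_trichotomy (e z) (e (-z)) with h | h | h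
    · simp [h, h.not_gt]
    · simp [h]
    · simp [h, h.not_gt]
  · intro z hz
    have hne : e z ≠ e (-z) := by
      intro h
      have h1 : z = -z := e.injective h
      have h2 : (2 : ℕ) • z = 0 := by rw [two_nsmul]; nth_rewrite 1 [h1]; simp
      have h3 : addOrderOf z ∣ 2 := addOrderOf_dvd_of_nsmul_eq_zero h2
      have h4 : addOrderOf z ∣ Fintype.card A := addOrderOf_dvd_card
      have h5 : addOrderOf z ∣ 1 := by
        have := Nat.dvd_gcd h3 h4
        rwa [Nat.Coprime.gcd_eq_one (Nat.coprime_two_left.mpr ho)] at this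
      exact hz (AddMonoid.addOrderOf_eq_one_iff.mp (Nat.dvd_one.mp h5))
    rcases lt_or_gt_of_ne hne with h | h
    · simp [h]
    · simp [h, h.not_gt]

/-- Iterated convolution. -/
def conv (c : A → ℚ) : ℕ → A → ℚ
  | 0 => fun z => if z = 0 then 1 else 0
  | k + 1 => fun z => ∑ w, c w * conv c k (z - w)

theorem conv_pow {ι : Type} [Fintype ι] [DecidableEq ι] (f : A → Matrix ι ι ℚ)
    (h0 : f 0 = 1) (hf : ∀ x y, f (x + y) = f x * f y) (c : A → ℚ) (k : ℕ) :
    (∑ z, c z • f z) ^ k = ∑ z, conv c k z • f z := by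
  induction k with
  | zero => simp [conv, h0]
  | succ k ih =>
    rw [pow_succ', ih, Finset.sum_mul]
    simp only [Finset.mul_sum, conv, Finset.sum_smul]
    rw [Finset.sum_comm (s := Finset.univ) (t := Finset.univ) (f := fun z w => (c w * conv c k (z - w)) • f z)]
    refine Finset.sum_congr rfl fun w _ => ?_
    refine Fintype.sum_equiv (Equiv.addLeft w) _ _ fun z => ?_
    simp only [Equiv.coe_addLeft, add_sub_cancel_left, hf, smul_mul_smul_comm]

/-- The model representation. -/
def Rm (w : A) : Matrix {a : A // a ≠ 0} {a : A // a ≠ 0} ℚ :=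
  Matrix.of fun y z => (if y.1 = z.1 + w then 1 else 0) - (if y.1 = w then 1 else 0)

theorem sum_ne (g : A → ℚ) : ∑ u : {a : A // a ≠ 0}, g u.1 = ∑ u, g u - g 0 := by
  rw [← Finset.sum_subtype (Finset.univ.erase (0 : A)) (by simp) g,
    ← Finset.sum_erase_add _ _ (Finset.mem_univ (0 : A))]; ring

theorem Rm_zero : Rm (0 : A) = 1 := by
  ext y z
  have := y.2
  simp [Rm, this, Matrix.one_apply, Subtype.ext_iff]

theorem Rm_add (w w' : A) : Rm (w + w') = Rm w * Rm w' := by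
  ext y z
  rw [Matrix.mul_apply]
  simp only [Rm, Matrix.of_apply]
  rw [sum_ne (fun u => ((if y.1 = u + w then (1 : ℚ) else 0) - (if y.1 = w then 1 else 0)) *
    ((if u = z.1 + w' then 1 else 0) - (if u = w' then 1 else 0)))]
  simp only [mul_sub, Finset.sum_sub_distrib, mul_ite, mul_one, mul_zero, Finset.sum_ite_eq', 
    Finset.mem_univ, if_true, zero_add, sub_self]
  rw [show z.1 + w' + w = z.1 + (w + w') by abel, show w' + w = w + w' by abel]
  simp

theorem Rm_trace (w : A) : (Rm w).trace = if w = 0 then (Fintype.card A : ℚ) - 1 else -1 := by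
  by_cases hw : w = 0
  · subst hw
    rw [Rm_zero, trace_one, if_pos rfl, Fintype.card_subtype_compl, Fintype.card_subtype_eq,
      Nat.cast_sub Fintype.card_pos, Nat.cast_one]
  · rw [if_neg hw, Matrix.trace]
    simp only [Rm, Matrix.diag_apply, Matrix.of_apply]
    rw [sum_ne (fun u => (if u = u + w then (1 : ℚ) else 0) - (if u = w then 1 else 0))]
    simp [hw, Ne.symm hw]

theorem X0_facts (ho : Odd (Fintype.card A)) {c : A → ℤ} (c0 : c 0 = 0) (cn : ∀ z, c (-z) = - c z)
    (co : ∀ z, z ≠ 0 → Odd (c z)) :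
    (∑ z, (c z : ℚ) • Rm z).det ≠ 0 ∧
      IsSquare ((Fintype.card A : ℚ) * (∑ z, (c z : ℚ) • Rm z).det) := by
  have hcard : Fintype.card {a : A // a ≠ 0} + 1 = Fintype.card A := by
    rw [Fintype.card_subtype_compl, Fintype.card_subtype_eq]
    have : 0 < Fintype.card A := Fintype.card_pos
    omega
  let S : Matrix {a : A // a ≠ 0} {a : A // a ≠ 0} ℤ := 
    Matrix.of fun y z => c (y.1 - z.1) - c y.1 + c z.1
  have hX : ∀ y z : {a : A // a ≠ 0}, (∑ z, (c z : ℚ) • Rm z) y z = c (y.1 - z.1) - c y.1 := by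
    intro y z
    rw [Matrix.sum_apply]
    simp only [Matrix.smul_apply, Rm, Matrix.of_apply, smul_eq_mul, mul_sub,
      Finset.sum_sub_distrib, mul_ite, mul_one, mul_zero]
    have : ∀ x, (y.1 = z.1 + x) = (y.1 - z.1 = x) := by
      intro x; rw [eq_iff_iff, sub_eq_iff_eq_add']
    simp [this]
  have hG : ((1 : Matrix {a : A // a ≠ 0} {a : A // a ≠ 0} ℚ) + Matrix.of fun _ _ => (1 : ℚ)) *
      (∑ z, (c z : ℚ) • Rm z) = S.map (Int.castRingHom ℚ) := by
    ext y z
    rw [add_mul, one_mul, Matrix.add_apply, Matrix.mul_apply]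
    simp only [hX, Matrix.of_apply, one_mul]
    rw [sum_ne (fun u => (c (u - z.1) : ℚ) - c u), Finset.sum_sub_distrib]
    have : ∑ u, (c (u - z.1) : ℚ) = ∑ u, (c u : ℚ) :=
      Fintype.sum_equiv (Equiv.subRight z.1) _ _ fun u => rfl
    simp [this, S, c0, cn]
  have hdet := congrArg Matrix.det hG
  rw [det_mul, det_one_add_J] at hdet
  have hcast : ((Fintype.card {a : A // a ≠ 0} : ℚ) + 1) = Fintype.card A := by exact_mod_cast hcard
  rw [hcast] at hdet
  constructor
  · intro h0
    rw [h0, mul_zero] at hdet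
    have h1 : S.det = 0 := by
      have : ((S.det : ℤ) : ℚ) = 0 := by
        rw [hdet]; exact (Int.castRingHom ℚ).map_det S
      exact_mod_cast this
    have h2 : S.map (Int.castRingHom (ZMod 2)) = 1 + Matrix.of fun _ _ => (1 : ZMod 2) := by
      ext y z
      have odd1 : ∀ u, u ≠ 0 → ((c u : ℤ) : ZMod 2) = 1 := fun u hu =>
        (ZMod.intCast_eq_one_iff_odd).mpr (co u hu)
      by_cases hyz : y = z
      · subst hyz
        simp [S, c0]; decide
      · have h3 : y.1 - z.1 ≠ 0 := sub_ne_zero.mpr fun h => hyz (Subtype.ext h)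
        simp [S, odd1 _ h3, odd1 _ y.2, odd1 _ z.2, hyz]
    have h3 : (S.map (Int.castRingHom (ZMod 2))).det = 0 := by
      have := (Int.castRingHom (ZMod 2)).map_det S
      rw [h1] at this
      rw [map_zero] at this
      exact this.symm
    rw [h2, det_one_add_J] at h3
    have h4 : ((Fintype.card A : ℕ) : ZMod 2) = 0 := by rw [← h3, ← hcard]; push_cast; rfl
    rw [ZMod.natCast_eq_zero_iff_even] at h4
    exact (Nat.not_even_iff_odd.mpr ho) h4
  · rw [hdet]
    refine skew_det_isSquare _ _ rfl _ ?_ ?_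
    · ext y z
      simp only [Matrix.transpose_apply, Matrix.map_apply, Matrix.neg_apply, S, Matrix.of_apply]
      rw [← neg_sub y.1 z.1, cn, ← map_neg]; congr 1; ring
    · intro i; simp [S, c0]

theorem disc_abs (ho : Odd (Fintype.card A)) {n m : ℕ} (hm : Odd m)
    (hn : n = m * (Fintype.card A - 1))
    (f : A → Matrix (Fin n) (Fin n) ℚ) (f0 : f 0 = 1) (hf : ∀ x y, f (x + y) = f x * f y)
    (ht : ∀ z, z ≠ 0 → (f z).trace = - (m : ℚ)) (H : Matrix (Fin n) (Fin n) ℚ) (hs : Hᵀ = H)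
    (hu : H.det ≠ 0) (hinv : ∀ z, (f z)ᵀ * H * f z = H) :
    ∃ r : ℚ, r ≠ 0 ∧ H.det = (Fintype.card A : ℚ) * r ^ 2 := by
  obtain ⟨c, c0, cn, co⟩ := exists_sign ho
  obtain ⟨hX0, s, hs0⟩ := X0_facts ho c0 cn co
  set X0 := ∑ z, (c z : ℚ) • Rm z with hX0d
  set X := ∑ z, (c z : ℚ) • f z with hXd
  have hcp : 0 < Fintype.card A := Fintype.card_pos
  have hcard : Fintype.card ({a : A // a ≠ 0} × Fin m) = n := by
    rw [Fintype.card_prod, Fintype.card_subtype_compl, Fintype.card_subtype_eq, Fintype.card_fin, hn,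
      mul_comm]
  have htr : ∀ z, (f z).trace = m * (Rm z).trace := by
    intro z
    rw [Rm_trace]
    by_cases hz : z = 0
    · subst hz
      rw [if_pos rfl, f0, trace_one, Fintype.card_fin, hn, Nat.cast_mul, Nat.cast_sub hcp, Nat.cast_one]
    · rw [if_neg hz, ht z hz]; ring
  have htk : ∀ k, (X ^ k).trace = m * (X0 ^ k).trace := by
    intro k
    rw [hXd, hX0d, conv_pow f f0 hf, conv_pow Rm Rm_zero Rm_add, trace_sum, trace_sum, Finset.mul_sum]
    refine Finset.sum_congr rfl fun z _ => ?_
    rw [trace_smul, trace_smul, htr, smul_eq_mul, smul_eq_mul]; ring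
  let e : ({a : A // a ≠ 0} × Fin m) ≃ Fin n := Fintype.equivFinOfCardEq hcard
  let Y : Matrix (Fin n) (Fin n) ℚ := Matrix.reindexAlgEquiv ℚ ℚ e (kroneckerMap (· * ·) X0 (1 : Matrix (Fin m) (Fin m) ℚ))
  have hYdet : Y.det = X0.det ^ m := by
    simp only [Y]
    rw [Matrix.det_reindexAlgEquiv, Matrix.det_kronecker]; simp
  have hYk : ∀ k, (Y ^ k).trace = m * (X0 ^ k).trace := by
    intro k
    simp only [Y]
    rw [← map_pow]
    have h1 : (kroneckerMap (· * ·) X0 (1 : Matrix (Fin m) (Fin m) ℚ)) ^ k =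
        kroneckerMap (· * ·) (X0 ^ k) (1 : Matrix (Fin m) (Fin m) ℚ) := by
      induction k with
      | zero => simp
      | succ k ih => rw [pow_succ, ih, ← Matrix.mul_kronecker_mul, pow_succ, one_mul]
    rw [h1]
    have h2 : ∀ M : Matrix ({a : A // a ≠ 0} × Fin m) ({a : A // a ≠ 0} × Fin m) ℚ,
        (Matrix.reindexAlgEquiv ℚ ℚ e M).trace = M.trace := by
      intro M
      simp only [Matrix.trace, Matrix.diag_apply, Matrix.reindexAlgEquiv_apply, Matrix.reindex_apply,
        Matrix.submatrix_apply]
      exact Fintype.sum_equiv e.symm _ _ fun _ => rfl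
    rw [h2, Matrix.trace_kronecker, trace_one, Fintype.card_fin, mul_comm]
  have hdet : X.det = X0.det ^ m := by
    rw [← hYdet]
    have h1 := det_eq_of_trace_pow (X.map (Rat.castHom ℂ)) (Y.map (Rat.castHom ℂ)) (by
      intro k
      have h2 : ∀ M : Matrix (Fin n) (Fin n) ℚ, ((M.map (Rat.castHom ℂ)) ^ k).trace = ((M ^ k).trace : ℚ) := by
        intro M
        have h3 : (M.map (Rat.castHom ℂ)) ^ k = (M ^ k).map (Rat.castHom ℂ) :=
          (map_pow (Rat.castHom ℂ).mapMatrix M k).symm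
        rw [h3]; simp [Matrix.trace]
      rw [h2, h2, htk, hYk])
    have h4 : ∀ M : Matrix (Fin n) (Fin n) ℚ, (M.map (Rat.castHom ℂ)).det = (M.det : ℚ) := fun M =>
      ((Rat.castHom ℂ).map_det M).symm
    rw [h4, h4] at h1
    exact_mod_cast h1
  have hinv' : ∀ z, (f z)ᵀ * H = H * f (-z) := by
    intro z
    calc (f z)ᵀ * H = (f z)ᵀ * H * (f z * f (-z)) := by rw [← hf, add_neg_cancel, f0, mul_one]
      _ = _ := by rw [← mul_assoc, hinv]
  have hskew : (H * X)ᵀ = -(H * X) := by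
    rw [Matrix.transpose_mul, hs, hXd, Matrix.transpose_sum, Finset.sum_mul, Finset.mul_sum,
      ← Finset.sum_neg_distrib]
    refine Fintype.sum_equiv (Equiv.neg A) _ _ fun z => ?_
    rw [Matrix.transpose_smul, Matrix.smul_mul, hinv', Equiv.neg_apply, cn, Matrix.mul_smul]
    simp
  obtain ⟨r, hr⟩ := skew_det_isSquare _ (Fin n) rfl (H * X) hskew (by
    intro i
    have := congrFun (congrFun hskew i) i
    simp only [Matrix.transpose_apply, Matrix.neg_apply] at this
    linarith)
  rw [det_mul, hdet] at hr
  obtain ⟨j, rfl⟩ := hm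
  have hc0 : (Fintype.card A : ℚ) ≠ 0 := by exact_mod_cast hcp.ne'
  have hs1 : s ≠ 0 := by
    rintro rfl
    rw [mul_zero] at hs0
    exact (mul_ne_zero hc0 hX0) hs0
  have hr1 : r ≠ 0 := by
    rintro rfl
    rw [mul_zero] at hr
    exact (mul_ne_zero hu (pow_ne_zero _ hX0)) hr
  refine ⟨r / (X0.det ^ j * s), by positivity, ?_⟩
  rw [div_pow, mul_div_assoc', eq_div_iff (by positivity)]
  calc H.det * (X0.det ^ j * s) ^ 2 = H.det * X0.det ^ (2 * j) * (s * s) := by ring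
    _ = H.det * X0.det ^ (2 * j) * (Fintype.card A * X0.det) := by rw [hs0]
    _ = Fintype.card A * (H.det * X0.det ^ (2 * j + 1)) := by ring
    _ = _ := by rw [hr]; ring

end Disc

end Paper

end

noncomputable section
open Matrix

namespace Paper

set_option linter.unusedSectionVars false

section KK

variable {q : ℕ} {F : Type} [Field F] [Fintype F] [hS : Su q F] [DecidableEq F]

/-- The quadratic character with rational values. -/
def chi (x : F) : ℚ := ((quadraticChar F x : ℤ) : ℚ)

theorem chi_mul (x y : F) : chi (x * y) = chi x * chi y := by
  simp only [chi]; rw [_root_.map_mul]; push_cast; rfl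

theorem chi_zero : chi (0 : F) = 0 := by simp [chi]

theorem chi_one : chi (1 : F) = 1 := by simp [chi]

theorem chi_sq {x : F} (h : x ≠ 0) : chi x * chi x = 1 := by
  rw [← chi_mul, ← pow_two, chi, quadraticChar_sq_one' h]; simp

theorem chi_inv (x : F) : chi x⁻¹ = chi x := by
  by_cases h : x = 0
  · subst h; simp
  · have h1 : chi x⁻¹ * chi x = 1 := by rw [← chi_mul, inv_mul_cancel₀ h, chi_one]
    calc chi x⁻¹ = chi x⁻¹ * (chi x * chi x) := by rw [chi_sq h, mul_one]
      _ = _ := by rw [← mul_assoc, h1, one_mul]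

theorem chi_nm {x : F} (h : x ≠ 0) : chi (nm q x) = 1 := by
  rw [nm_eq_pow]
  obtain ⟨m, hm⟩ : Even (q + 1) := hS.odd.add_one
  rw [hm, pow_add, chi_mul, chi_sq (pow_ne_zero _ h)]

theorem chi_sg (x : F) : chi (sg q x) = chi x := by
  by_cases h : x = 0
  · subst h; simp
  · have h1 := chi_nm (q := q) h
    rw [nm, chi_mul] at h1
    calc chi (sg q x) = (chi x * chi x) * chi (sg q x) := by rw [chi_sq h, one_mul]
      _ = chi x * (chi x * chi (sg q x)) := by ring
      _ = _ := by rw [h1, mul_one]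

theorem chi_fix {x : F} (h : x ≠ 0) (hx : sg q x = x) : chi x = 1 := by
  obtain ⟨y, hy⟩ := exists_nm q h hx
  rw [← hy, chi_nm y.ne_zero]

theorem chi_sum (h2 : (2 : F) ≠ 0) : ∑ x : F, chi x = 0 := by
  have hc : ringChar F ≠ 2 := by
    intro h
    apply h2
    have := ringChar.Nat.cast_ringChar (R := F)
    rw [h] at this; exact_mod_cast this
  have := quadraticChar_sum_zero hc
  simp only [chi]
  exact_mod_cast this

/-- The kernel function. -/
def kk (x : Pt q F) : ℚ := chi x.1.2

theorem b_ne {x : Pt q F} (h : x ≠ 1) : x.1.2 ≠ 0 := by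
  intro h0
  apply h
  have h1 := x.2
  rw [h0, map_zero, add_zero, zero_add] at h1
  apply Pt.ext
  · by_contra h2
    exact nm_ne q h2 h1
  · exact h0

theorem kk_one : kk (1 : Pt q F) = 0 := by simp [kk, chi_zero]

theorem kk_inv (x : Pt q F) : kk x⁻¹ = kk x := by simp [kk, chi_sg]

theorem kk_sq {x : Pt q F} (h : x ≠ 1) : kk x * kk x = 1 := chi_sq (b_ne h)

theorem kk_act (t : Fˣ) (x : Pt q F) : kk (act t x) = kk x := by
  simp [kk, chi_mul, chi_nm t.ne_zero]

/-- Inversion. -/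
def JJ (x : Pt q F) : Pt q F := Pt.mk (x.1.1 / sg q x.1.2) (sg q x.1.2)⁻¹ (by
  by_cases h : x = 1
  · subst h; simp [nm]
  · have h1 := b_ne h
    have h2 := sg_ne (q := q) h1
    have h3 := x.2
    rw [nm] at h3
    simp only [nm, map_div₀, map_inv₀, sg_sg]
    field_simp
    linear_combination h3)

theorem JJ_bij : Function.Bijective (JJ : Pt q F → Pt q F) := by
  rw [Fintype.bijective_iff_injective_and_card]
  refine ⟨?_, rfl⟩
  intro x y h
  have h1 : (sg q x.1.2)⁻¹ = (sg q y.1.2)⁻¹ := congrArg (fun w : Pt q F => w.1.2) h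
  have h2 : x.1.2 = y.1.2 := (sg q).injective (inv_injective h1)
  have h3 : x.1.1 / sg q x.1.2 = y.1.1 / sg q y.1.2 := congrArg (fun w : Pt q F => w.1.1) h
  by_cases hx : x = 1
  · by_contra hy
    apply b_ne (x := y) (fun h => hy (by rw [hx, h]))
    rw [← h2, hx]; rfl
  · have h4 := sg_ne (q := q) (b_ne hx)
    rw [← h2] at h3
    apply Pt.ext _ h2
    field_simp at h3
    exact h3

/-- Total sum. -/
def sK (q : ℕ) (F : Type) [Field F] [Fintype F] [Su q F] [DecidableEq F] : ℚ := ∑ x : Pt q F, kk x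

theorem kk_conv (y : Pt q F) : ∑ w, kk w * kk (w⁻¹ * y) =
    (if y = 1 then (q : ℚ) ^ 3 else 0) + sK q F * kk y - 1 := by
  by_cases hy : y = 1
  · subst hy
    simp only [mul_one, kk_inv, kk_one, if_true, mul_zero, add_zero]
    rw [← Finset.add_sum_erase _ _ (Finset.mem_univ (1 : Pt q F)), kk_one, mul_zero, zero_add,
      Finset.sum_congr rfl (g := fun _ => (1 : ℚ)) (fun w hw => kk_sq (Finset.ne_of_mem_erase hw)),
      Finset.sum_const, Finset.card_erase_of_mem (Finset.mem_univ _), Finset.card_univ, card_Pt,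
      nsmul_eq_mul, mul_one, Nat.cast_sub]
    · push_cast; ring
    · have := q_ge q F; exact Nat.one_le_pow _ _ (by omega)
  · rw [if_neg hy]
    have hb := b_ne hy
    have hsb := sg_ne (q := q) hb
    let u : Pt q F := Pt.mk (-y.1.1 / y.1.2) (y.1.2)⁻¹ (by
      have h3 := y.2
      rw [nm] at h3
      simp only [nm, map_div₀, map_inv₀, map_neg]
      field_simp
      linear_combination h3)
    rw [← Fintype.sum_equiv (Equiv.ofBijective _ (JJ_bij (q := q) (F := F))) 
      (fun v => kk (JJ v) * kk ((JJ v)⁻¹ * y)) _ (fun _ => rfl)]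
    have key : ∀ v : Pt q F, kk (JJ v) * kk ((JJ v)⁻¹ * y) =
        kk y * kk (v * u) - if v = 1 then kk y * kk u else 0 := by
      intro v
      by_cases hv : v = 1
      · subst hv
        have : JJ (1 : Pt q F) = 1 := by apply Pt.ext <;> simp [JJ]
        simp [this, kk_one]
      · rw [if_neg hv, sub_zero]
        have h1 := b_ne hv
        have h2 := sg_ne (q := q) h1
        simp only [kk, ← chi_mul]
        rw [Pt.mul_b, Pt.mul_b, Pt.inv_a, Pt.inv_b]
        simp only [JJ, u, sg_sg, map_inv₀, map_div₀, map_neg]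
        have e1 : y.1.2 * (v.1.2 + (y.1.2)⁻¹ - sg q v.1.1 * (-y.1.1 / y.1.2)) =
          v.1.2 * ((v.1.2)⁻¹ + y.1.2 - -(sg q v.1.1 / v.1.2) * y.1.1) := by
          field_simp; ring
        rw [e1, chi_mul, chi_mul, chi_inv, chi_sg]
    simp only [key, Finset.sum_sub_distrib, Finset.sum_ite_eq', Finset.mem_univ, if_true]
    rw [← Finset.mul_sum, Fintype.sum_equiv (Equiv.mulRight u) (fun v => kk (v * u)) kk (fun _ => rfl)]
    have : kk y * kk u = 1 := by simp only [kk, u]; rw [chi_inv, chi_sq hb]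
    rw [this, sK]; ring

/-- Sums over cosets of the centre. -/
def TT (c : F) : ℚ := ∑ z : Zt q F, chi (z.1 + c / 2)

theorem zt_exists : ∃ z : Zt q F, z.1 ≠ 0 := by
  have h := card_Zt q (F := F)
  have h3 := q_ge q F
  have : 1 < Fintype.card (Zt q F) := by omega
  obtain ⟨z, hz⟩ := Fintype.exists_ne_of_one_lt_card this z0
  exact ⟨z, fun h => hz (Subtype.ext h)⟩

theorem exists_eps : ∃ ε : ℚ, ε * ε = 1 ∧ TT (q := q) (0 : F) = ε * (q - 1) ∧
    ∀ c : F, sg q c = c → c ≠ 0 → TT (q := q) c = -ε := by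
  obtain ⟨z1, hz1⟩ := zt_exists (q := q) (F := F)
  have h0 : TT (q := q) (0 : F) = chi z1.1 * (q - 1) := by
    rw [TT, zt_sum _ (chi z1.1)]
    · simp [z0, chi_zero]; ring
    · intro z hz
      have h1 : chi (z.1 / z1.1) = 1 := chi_fix (q := q) (div_ne_zero hz hz1) (by
        rw [map_div₀, z.2, z1.2, neg_div_neg_eq])
      have h2 : z.1 + 0 / 2 = (z.1 / z1.1) * z1.1 := by field_simp; ring
      rw [h2, chi_mul, h1, one_mul]
  have h1 : ∀ c : F, sg q c = c → c ≠ 0 → TT (q := q) c = TT (q := q) (1 : F) := by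
    intro c hc hc0
    have hb : Function.Bijective (fun z : Zt q F => (⟨c * z.1, by
        rw [_root_.map_mul, hc, z.2]; ring⟩ : Zt q F)) := by
      rw [Fintype.bijective_iff_injective_and_card]
      refine ⟨?_, rfl⟩
      intro z w h
      exact Subtype.ext (mul_left_cancel₀ hc0 (congrArg Subtype.val h))
    rw [TT, TT]
    symm
    refine Fintype.sum_equiv (Equiv.ofBijective _ hb) _ _ fun z => ?_
    simp only [Equiv.ofBijective_apply]
    rw [show c * z.1 + c / 2 = c * (z.1 + 1 / 2) by ring, chi_mul, chi_fix hc0 hc, one_mul]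
  have h2 : ∑ c : Fx q F, TT (q := q) c.1 = 0 := by
    rw [← chi_sum (two_ne q (F := F)), Fintype.sum_equiv (fxzt q) chi (fun y => chi (y.1.1 + y.2.1)) (by
      intro x; congr 1; exact ((fxzt q).symm_apply_apply x).symm), Fintype.sum_prod_type]
    have h2 := two_ne q (F := F)
    have hb : Function.Bijective (fun z : Fx q F => (⟨z.1 / 2, by
        rw [map_div₀, z.2, sg_two]⟩ : Fx q F)) := by
      rw [Fintype.bijective_iff_injective_and_card]
      refine ⟨?_, rfl⟩
      intro z w h
      have := congrArg Subtype.val h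
      simp only at this
      field_simp at this
      exact Subtype.ext this
    refine Fintype.sum_equiv (Equiv.ofBijective _ hb) _ _ fun z => ?_
    simp only [Equiv.ofBijective_apply, TT]
    exact Finset.sum_congr rfl fun w _ => by rw [add_comm]
  have h3 : TT (q := q) (0 : F) + (q - 1) * TT (q := q) (1 : F) = 0 := by
    rw [← h2]
    let c0 : Fx q F := ⟨0, by simp⟩
    rw [← Finset.add_sum_erase _ _ (Finset.mem_univ c0), Finset.sum_congr rfl
      (g := fun _ => TT (q := q) (1 : F)), Finset.sum_const, Finset.card_erase_of_mem (Finset.mem_univ _),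
      Finset.card_univ, card_Fx, nsmul_eq_mul, Nat.cast_sub, Nat.cast_one]
    · have := q_ge q F; omega
    · intro c hc
      exact h1 c.1 c.2 fun h => Finset.ne_of_mem_erase hc (Subtype.ext h)
  have hq : (q : ℚ) - 1 ≠ 0 := by
    have : (3 : ℚ) ≤ q := by exact_mod_cast q_ge q F
    linarith
  have h4 : TT (q := q) (1 : F) = -chi z1.1 := by
    apply mul_left_cancel₀ hq
    linear_combination h3 - h0
  refine ⟨chi z1.1, chi_sq hz1, h0, fun c hc hc0 => ?_⟩
  rw [h1 c hc hc0, h4]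

theorem kk_coset (x : Pt q F) : ∑ z : Zt q F, kk (zz z * x) = TT (q := q) (-nm q x.1.1) := by
  rw [TT]
  have h2 := two_ne q (F := F)
  have hp := x.2
  let w : Zt q F := ⟨x.1.2 + nm q x.1.1 / 2, by
    rw [map_add, map_div₀, sg_two, sg_nm]; field_simp; linear_combination 2 * hp⟩
  have hb : Function.Bijective (fun z : Zt q F => (⟨z.1 + w.1, by
      rw [map_add, w.2, z.2]; ring⟩ : Zt q F)) := by
    rw [Fintype.bijective_iff_injective_and_card]
    refine ⟨?_, rfl⟩
    intro z w h
    exact Subtype.ext (add_right_cancel (congrArg Subtype.val h))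
  refine Fintype.sum_equiv (Equiv.ofBijective _ hb) _ _ fun z => ?_
  simp only [Equiv.ofBijective_apply, kk, Pt.mul_b, zz_a, zz_b, map_zero, w]
  congr 1; ring

theorem exists_eps' : ∃ ε : ℚ, ε * ε = 1 ∧ sK q F = - ε * q * (q - 1) ∧
    ∀ x : Pt q F, ∑ z : Zt q F, kk (zz z * x) = if x.1.1 = 0 then ε * (q - 1) else -ε := by
  obtain ⟨ε, h1, h2, h3⟩ := exists_eps (q := q) (F := F)
  have h4 : ∀ x : Pt q F, ∑ z : Zt q F, kk (zz z * x) = if x.1.1 = 0 then ε * (q - 1) else -ε := by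
    intro x
    rw [kk_coset]
    split_ifs with h
    · rw [h, ← h2]; simp [nm]
    · exact h3 _ (by rw [map_neg, sg_nm]) (neg_ne_zero.mpr (nm_ne q h))
  refine ⟨ε, h1, ?_, h4⟩
  rw [sK, ← Fintype.sum_equiv (ptEquiv (q := q) (F := F)) (fun y => kk (zz y.2 * vv y.1)) kk (fun _ => rfl),
    Fintype.sum_prod_type]
  have : ∀ x : F, ∑ z : Zt q F, kk (zz z * vv x) = -ε + if x = 0 then ε * q else 0 := by
    intro x
    have hx : (vv x : Pt q F).1.1 = x := rfl
    rw [h4]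
    by_cases h : x = 0
    · rw [if_pos (hx.trans h), if_pos h]; ring
    · rw [if_neg (fun h' => h (hx.symm.trans h')), if_neg h]; ring
  simp only [this, Finset.sum_add_distrib, Finset.sum_const, Finset.card_univ, hS.card,
    Finset.sum_ite_eq', Finset.mem_univ, if_true, nsmul_eq_mul]
  push_cast; ring

/-- The idempotent. -/
theorem exists_pp : ∃ p : Pt q F → ℚ, (∀ y, ∑ w, p w * p (w⁻¹ * y) = p y) ∧
    (∀ t y, p (act t y) = p y) ∧ (∀ y, ∑ z : Zt q F, p (zz z * y) = 0) ∧
    (q : ℚ) ^ 3 * p 1 = q ^ 2 - q := by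
  obtain ⟨ε, h1, h2, h3⟩ := exists_eps' (q := q) (F := F)
  have hq3 : (3 : ℚ) ≤ q := by exact_mod_cast q_ge q F
  have hq0 : (q : ℚ) ≠ 0 := by positivity
  have hq1 : (q : ℚ) + 1 ≠ 0 := by positivity
  let d : Pt q F → ℚ := fun y => if y = 1 then 1 else 0
  refine ⟨fun y => (d y - ε * kk y / q - 1 / q ^ 2) / (q + 1), ?_, ?_, ?_, ?_⟩
  · intro y
    have e : ∀ w : Pt q F, (d w - ε * kk w / q - 1 / q ^ 2) / ((q : ℚ) + 1) *
        ((d (w⁻¹ * y) - ε * kk (w⁻¹ * y) / q - 1 / q ^ 2) / (q + 1)) =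
        (1 / ((q : ℚ) + 1) ^ 2) * (d w * (d (w⁻¹ * y) - ε * kk (w⁻¹ * y) / q - 1 / q ^ 2)
        + d (w⁻¹ * y) * (- ε * kk w / q - 1 / q ^ 2)
        + (ε * ε / q ^ 2) * (kk w * kk (w⁻¹ * y)) + (ε / q ^ 3) * kk w
        + (ε / q ^ 3) * kk (w⁻¹ * y) + 1 / q ^ 4) := by
      intro w; field_simp; ring
    rw [Finset.sum_congr rfl fun w _ => e w, ← Finset.mul_sum]
    simp only [Finset.sum_add_distrib]
    rw [← Finset.mul_sum, ← Finset.mul_sum, ← Finset.mul_sum, kk_conv]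
    have e1 : ∑ w, kk (w⁻¹ * y) = sK q F := by
      rw [sK]
      exact Fintype.sum_equiv ((Equiv.inv _).trans (Equiv.mulRight y)) _ _ fun w => rfl
    have e2 : ∑ w : Pt q F, kk w = sK q F := rfl
    have e3 : ∑ w : Pt q F, d w * (d (w⁻¹ * y) - ε * kk (w⁻¹ * y) / q - 1 / q ^ 2) =
        d y - ε * kk y / q - 1 / q ^ 2 := by
      rw [Finset.sum_eq_single 1]
      · simp [d]
      · intro b _ hb; simp [d, hb]
      · simp
    have e4 : ∑ w : Pt q F, d (w⁻¹ * y) * (- ε * kk w / q - 1 / q ^ 2) = - ε * kk y / q - 1 / q ^ 2 := by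
      rw [Finset.sum_eq_single y]
      · simp [d]
      · intro b _ hb
        have : b⁻¹ * y ≠ 1 := fun h => hb (inv_mul_eq_one.mp h)
        simp [d, this]
      · simp
    have e5 : (if y = 1 then (q : ℚ) ^ 3 else 0) = q ^ 3 * d y := by simp [d]
    rw [e1, e2, e3, e4, e5, Finset.sum_const, Finset.card_univ, card_Pt, nsmul_eq_mul, h2, h1]
    push_cast
    field_simp
    linear_combination (-2 * ((q:ℚ) - 1)) * h1
  · intro t y
    have : d (act t y) = d y := by
      simp only [d]
      have : act t y = 1 ↔ y = 1 := by
        constructor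
        · intro h
          have := congrArg (act t⁻¹) h
          rwa [← act_mul, inv_mul_cancel, act_one, _root_.map_one] at this
        · rintro rfl; exact _root_.map_one _
      simp [this]
    simp only [this, kk_act]
  · intro y
    rw [← Finset.sum_div, Finset.sum_sub_distrib, Finset.sum_sub_distrib, ← Finset.sum_div,
      ← Finset.mul_sum, h3]
    have : ∑ z : Zt q F, d (zz z * y) = if y.1.1 = 0 then 1 else 0 := by
      simp only [d]
      split_ifs with h
      · have hy := y.2
        rw [h] at hy
        let w : Zt q F := ⟨- y.1.2, by simp [nm] at hy; rw [map_neg]; linear_combination -hy⟩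
        rw [Finset.sum_eq_single w]
        · rw [if_pos]; apply Pt.ext <;> simp [h, w]
        · intro b _ hb
          rw [if_neg]
          intro hh
          apply hb
          have := congrArg (fun x : Pt q F => x.1.2) hh
          simp at this
          exact Subtype.ext (by simp only [w]; linear_combination this)
        · simp
      · apply Finset.sum_eq_zero
        intro z _
        rw [if_neg]
        intro hh
        apply h
        have := congrArg (fun x : Pt q F => x.1.1) hh
        simpa using this
    rw [this, Finset.sum_const, Finset.card_univ, card_Zt, nsmul_eq_mul]
    split_ifs with h
    · field_simp; linear_combination (1 - (q:ℚ)) * h1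
    · field_simp; linear_combination h1
  · simp only [d, kk_one, if_true]
    field_simp; ring

end KK

end Paper

end

noncomputable section
open Matrix

namespace Paper

set_option linter.unusedSectionVars false

theorem rank_factor {K ι : Type} [Field K] [Fintype ι] [DecidableEq ι] (P : Matrix ι ι K)
    (hP : P * P = P) : ∃ (r : ℕ) (A : Matrix ι (Fin r) K) (C : Matrix (Fin r) ι K),
      C * A = 1 ∧ A * C = P := by
  let W := LinearMap.range (Matrix.toLin' P)
  let b := Module.finBasis K W
  have hmem : ∀ v, P *ᵥ v ∈ W := fun v => ⟨v, by simp⟩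
  have hfix : ∀ w : W, P *ᵥ w.1 = w.1 := by
    rintro ⟨w, v, rfl⟩
    simp [hP]
  refine ⟨Module.finrank K W, Matrix.of fun i j => (b j).1 i,
    Matrix.of fun j i => b.repr ⟨P *ᵥ (Pi.single i 1), hmem _⟩ j, ?_, ?_⟩
  · ext j k
    rw [Matrix.mul_apply]
    simp only [Matrix.of_apply]
    have h1 : b k = ∑ i, (b k).1 i • (⟨P *ᵥ (Pi.single i 1), hmem _⟩ : W) := by
      apply Subtype.ext
      rw [Submodule.coe_sum]
      simp only [Submodule.coe_smul]
      have h0 : (b k).1 = P *ᵥ ∑ i, (b k).1 i • (Pi.single i 1 : ι → K) := by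
        rw [← pi_eq_sum_univ' (b k).1, hfix]
      refine h0.trans ?_
      rw [Matrix.mulVec_sum]
      exact Finset.sum_congr rfl fun i _ => Matrix.mulVec_smul _ _ _
    have h2 := congrArg (fun w => b.repr w j) h1
    simp only [map_sum, map_smul, Module.Basis.repr_self, Finsupp.coe_finsetSum, Finset.sum_apply,
      Finsupp.coe_smul, Pi.smul_apply, smul_eq_mul] at h2
    rw [Matrix.one_apply, Finset.sum_congr rfl fun i _ => mul_comm _ _, ← h2, Finsupp.single_apply]
    simp [eq_comm]
  · ext i k
    rw [Matrix.mul_apply]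
    simp only [Matrix.of_apply]
    have h1 := b.sum_repr ⟨P *ᵥ (Pi.single k 1), hmem _⟩
    have h2 := congrArg (fun w : W => w.1 i) h1
    simp only [Submodule.coe_sum, Submodule.coe_smul, Finset.sum_apply, Pi.smul_apply, smul_eq_mul] at h2
    rw [Finset.sum_congr rfl fun j _ => mul_comm _ _, h2]
    simp

section Rep

variable {q : ℕ} {F : Type} [Field F] [Fintype F] [hS : Su q F] [DecidableEq F]
variable {G : Type} [Group G] [Fintype G]

/-- The action on the unipotent group. -/
def BG.ac (B : BG q F G) (g : G) (y : Pt q F) : Pt q F :=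
  ((Equiv.ofBijective _ B.bij).symm g).1 * act ((Equiv.ofBijective _ B.bij).symm g).2 y

theorem BG.ac_UD (B : BG q F G) (x : Pt q F) (t : Fˣ) (y : Pt q F) :
    B.ac (B.U x * B.D t) y = x * act t y := by
  have : (Equiv.ofBijective _ B.bij).symm (B.U x * B.D t) = (x, t) := by
    rw [Equiv.symm_apply_eq]; rfl
  rw [BG.ac, this]

theorem BG.ac_mul (B : BG q F G) (g h : G) (y : Pt q F) : B.ac (g * h) y = B.ac g (B.ac h y) := by
  obtain ⟨⟨x, t⟩, rfl⟩ := B.bij.2 g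
  obtain ⟨⟨w, u⟩, rfl⟩ := B.bij.2 h
  simp only
  have : B.U x * B.D t * (B.U w * B.D u) = B.U (x * act t w) * B.D (t * u) := by
    rw [_root_.map_mul, _root_.map_mul, mul_assoc, ← mul_assoc (B.D t), B.conj]
    simp only [mul_assoc]
  rw [this, B.ac_UD, B.ac_UD, B.ac_UD, _root_.map_mul, act_mul, mul_assoc]

theorem BG.ac_one (B : BG q F G) (y : Pt q F) : B.ac 1 y = y := by
  have := B.ac_UD 1 1 y
  rwa [_root_.map_one, _root_.map_one, mul_one, act_one, one_mul] at this

theorem BG.ac_U (B : BG q F G) (x y : Pt q F) : B.ac (B.U x) y = x * y := by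
  have := B.ac_UD x 1 y
  rwa [_root_.map_one, mul_one, act_one] at this

theorem exists_rep (B : BG q F G) : ∃ f : G → Matrix (Fin (q ^ 2 - q)) (Fin (q ^ 2 - q)) ℚ,
    f 1 = 1 ∧ (∀ g h, f (g * h) = f g * f h) ∧ ∑ z : Zt q F, f (B.U (zz z)) = 0 := by
  obtain ⟨p, p1, p2, p3, p4⟩ := exists_pp (q := q) (F := F)
  let P : Matrix (Pt q F) (Pt q F) ℚ := Matrix.of fun x y => p (x⁻¹ * y)
  have hP : P * P = P := by
    ext x y
    rw [Matrix.mul_apply]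
    simp only [P, Matrix.of_apply]
    rw [← p1 (x⁻¹ * y)]
    refine Fintype.sum_equiv (Equiv.mulLeft x⁻¹) _ _ fun w => ?_
    simp only [Equiv.coe_mulLeft]
    congr 2; group
  let π : G → Matrix (Pt q F) (Pt q F) ℚ := fun g => Matrix.of fun y' y => if y' = B.ac g y then 1 else 0
  have π1 : π 1 = 1 := by
    ext y' y; simp [π, B.ac_one, Matrix.one_apply]
  have πmul : ∀ g h, π (g * h) = π g * π h := by
    intro g h
    ext y' y
    simp [π, B.ac_mul, Matrix.mul_apply]
  have pinv : ∀ g x y, p ((B.ac g x)⁻¹ * B.ac g y) = p (x⁻¹ * y) := by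
    intro g x y
    obtain ⟨⟨w, t⟩, rfl⟩ := B.bij.2 g
    simp only
    rw [B.ac_UD, B.ac_UD, ← p2 t (x⁻¹ * y), _root_.map_mul, map_inv]
    congr 1; group
  have πP : ∀ g, π g * P = P * π g := by
    intro g
    ext y' y
    obtain ⟨x, rfl⟩ : ∃ x, B.ac g x = y' := ⟨B.ac g⁻¹ y', by
      rw [← B.ac_mul, mul_inv_cancel, B.ac_one]⟩
    have hinj : ∀ u v, B.ac g u = B.ac g v ↔ u = v := by
      intro u v
      refine ⟨fun h => ?_, fun h => by rw [h]⟩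
      have := congrArg (B.ac g⁻¹) h
      rwa [← B.ac_mul, ← B.ac_mul, inv_mul_cancel, B.ac_one, B.ac_one] at this
    rw [Matrix.mul_apply, Matrix.mul_apply]
    simp only [π, P, Matrix.of_apply, hinj, ite_mul, one_mul, zero_mul, mul_ite, mul_one, mul_zero]
    simp [pinv]
  obtain ⟨r, A, C, hCA, hAC⟩ := rank_factor P hP
  have hr : r = q ^ 2 - q := by
    have h1 : (A * C).trace = (C * A).trace := trace_mul_comm _ _
    rw [hCA, hAC, trace_one, Fintype.card_fin, Matrix.trace] at h1
    simp only [P, Matrix.diag_apply, Matrix.of_apply, inv_mul_cancel, Finset.sum_const, Finset.card_univ,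
      card_Pt, nsmul_eq_mul] at h1
    push_cast at h1
    rw [p4] at h1
    have h3 : q ≤ q ^ 2 := by have := q_ge q F; nlinarith
    have : ((q ^ 2 - q : ℕ) : ℚ) = r := by rw [Nat.cast_sub h3, ← h1]; push_cast; rfl
    exact_mod_cast this.symm
  subst hr
  have hPA : P * A = A := by rw [← hAC, Matrix.mul_assoc, hCA, Matrix.mul_one]
  have hCP : C * P = C := by rw [← hAC, ← Matrix.mul_assoc, hCA, Matrix.one_mul]
  refine ⟨fun g => C * π g * A, ?_, ?_, ?_⟩
  · simp only; rw [π1, Matrix.mul_one, hCA]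
  · intro g h
    simp only
    calc C * π (g * h) * A = C * P * (π g * π h) * A := by rw [hCP, πmul]
      _ = C * (P * π g) * π h * A := by simp only [Matrix.mul_assoc]
      _ = C * π g * P * π h * A := by rw [← πP]; simp only [Matrix.mul_assoc]
      _ = C * π g * A * (C * π h * A) := by rw [← hAC]; simp only [Matrix.mul_assoc]
  · simp only
    rw [← Matrix.sum_mul, ← Matrix.mul_sum]
    have : (∑ z : Zt q F, π (B.U (zz z))) * P = 0 := by
      ext x y
      rw [Finset.sum_mul, Matrix.sum_apply, Matrix.zero_apply, ← p3 (x⁻¹ * y)]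
      refine Finset.sum_congr rfl fun z _ => ?_
      rw [Matrix.mul_apply]
      simp only [π, P, Matrix.of_apply, B.ac_U]
      rw [Finset.sum_eq_single ((zz z)⁻¹ * x)]
      · rw [if_pos (by group), one_mul, ← mul_assoc, zz_comm]
        congr 1; group
      · intro b _ hb
        rw [if_neg, zero_mul]
        intro h; apply hb; rw [h]; group
      · simp
    rw [← hPA, ← Matrix.mul_assoc, Matrix.mul_assoc C, this, Matrix.mul_zero, Matrix.zero_mul]

/-- Divisibility of degrees. -/
theorem dvd_of_zsum (B : BG q F G) {m : ℕ} (f : G → Matrix (Fin m) (Fin m) ℂ) (f1 : f 1 = 1)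
    (fm : ∀ g h, f (g * h) = f g * f h) (fz : ∑ z : Zt q F, f (B.U (zz z)) = 0) :
    q * (q - 1) ∣ m := by
  have h3 := q_ge q F
  have hq0 : (q : ℂ) ≠ 0 := by exact_mod_cast (by omega : q ≠ 0)
  have hconj : ∀ g h, (f (h * g * h⁻¹)).trace = (f g).trace := by
    intro g h
    rw [fm, trace_mul_comm, ← fm]; congr 2; group
  have hval : ∀ x : Pt q F, x.1.1 ≠ 0 → (f (B.U x)).trace = 0 := by
    intro x hx
    have h1 : ∀ w : Zt q F, (f (B.U (zz w * x))).trace = (f (B.U x)).trace := by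
      intro w
      have h2 := two_ne q (F := F)
      have hs := sg_ne (q := q) hx
      let y : Pt q F := vv (w.1 / (2 * sg q x.1.1))
      have : zz w * x = y * x * y⁻¹ := by
        rw [eq_mul_inv_iff_mul_eq]
        apply Pt.ext
        · simp [y]; ring
        · simp [y, sg_two, w.2]; field_simp; ring
      rw [this, _root_.map_mul, _root_.map_mul, map_inv, hconj]
    have h2 : ((∑ z : Zt q F, f (B.U (zz z))) * f (B.U x)).trace = 0 := by rw [fz]; simp
    rw [Finset.sum_mul, trace_sum] at h2
    simp only [← fm, ← _root_.map_mul, h1, Finset.sum_const, Finset.card_univ, card_Zt, nsmul_eq_mul] at h2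
    exact (mul_eq_zero.mp h2).resolve_left hq0
  obtain ⟨z1, hz1⟩ := zt_exists (q := q) (F := F)
  set φ := (f (B.U (zz z1))).trace with hφ
  have hconst : ∀ z : Zt q F, z.1 ≠ 0 → (f (B.U (zz z))).trace = φ := by
    intro z hz
    obtain ⟨t, ht⟩ := exists_nm q (x := z.1 / z1.1) (div_ne_zero hz hz1) (by
      rw [map_div₀, z.2, z1.2, neg_div_neg_eq])
    obtain ⟨w, hw, hh⟩ := D_zz B t z1 1
    have : w = z := Subtype.ext (by rw [hw, ht]; field_simp)
    rw [this, _root_.map_one, mul_one, mul_one] at hh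
    rw [← hh, hconj]
  have f0 : (f (B.U (zz z0))).trace = m := by
    rw [zz_z0, _root_.map_one, f1]; simp
  have hsum : ∀ g : Zt q F → ℂ, g z0 = 1 → ∑ z, g z * (f (B.U (zz z))).trace = (m - φ) + φ * ∑ z, g z := by
    intro g hg
    rw [← Finset.add_sum_erase _ _ (Finset.mem_univ z0), ← Finset.add_sum_erase _ g (Finset.mem_univ z0),
      f0, hg, mul_add, Finset.mul_sum, Finset.sum_congr rfl (g := fun z => φ * g z)]
    · ring
    · intro z hz
      rw [hconst z fun h => Finset.ne_of_mem_erase hz (Subtype.ext h), mul_comm]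
  have e1 : (m : ℂ) - φ + φ * q = 0 := by
    have h1 := hsum (fun _ => 1) rfl
    have h2 := congrArg Matrix.trace fz
    rw [trace_sum] at h2
    simp only [one_mul, h2, Finset.sum_const, Finset.card_univ, card_Zt, nsmul_eq_mul, mul_one,
      Matrix.trace_zero] at h1
    exact h1.symm
  -- divisibility by q
  have d1 : q ∣ m := by
    have hv : ∀ a b : Fx q F, (vv a.1 : Pt q F) * vv b.1 = vv (a.1 + b.1) := by
      intro a b
      have h2 := two_ne q (F := F)
      apply Pt.ext
      · simp
      · simp [nm, a.2, b.2]; field_simp; ring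
    let c0 : Fx q F := ⟨0, by simp⟩
    have : Nonempty (Fx q F) := ⟨c0⟩
    obtain ⟨r, hr⟩ := fixed_nat (fun a : Fx q F => f (B.U (vv a.1))) (by
      intro w
      let e : Equiv.Perm (Fx q F) :=
        { toFun := fun z => ⟨w.1 + z.1, by rw [map_add, w.2, z.2]⟩
          invFun := fun z => ⟨-w.1 + z.1, by rw [map_add, map_neg, w.2, z.2]⟩
          left_inv := fun z => by ext; simp
          right_inv := fun z => by ext; simp }
      refine ⟨e, fun z => ?_⟩
      simp only [← fm, ← _root_.map_mul, hv, e]; rfl)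
    rw [Finset.sum_eq_single c0, card_Fx] at hr
    · have : (vv (c0.1) : Pt q F) = 1 := by apply Pt.ext <;> simp [c0, nm]
      rw [this, _root_.map_one, f1, trace_one, Fintype.card_fin] at hr
      exact ⟨r, by exact_mod_cast hr⟩
    · intro b _ hb
      exact hval _ fun h => hb (Subtype.ext h)
    · simp
  have d2 : (q - 1) ∣ m := by
    obtain ⟨ψ, hψ⟩ := (AddChar.exists_apply_ne_zero (α := F)).mpr hz1
    let e : Zt q F → Equiv.Perm (Zt q F) := fun w =>
      { toFun := fun z => ⟨w.1 + z.1, by rw [map_add, w.2, z.2]; ring⟩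
        invFun := fun z => ⟨-w.1 + z.1, by rw [map_add, map_neg, w.2, z.2]; ring⟩
        left_inv := fun z => by ext; simp
        right_inv := fun z => by ext; simp }
    have hs : ∑ z : Zt q F, ψ z.1 = 0 := by
      have h1 : ψ z1.1 * ∑ z : Zt q F, ψ z.1 = ∑ z : Zt q F, ψ z.1 := by
        rw [Finset.mul_sum]
        refine Fintype.sum_equiv (e z1) _ _ fun z => ?_
        simp [e, AddChar.map_add_eq_mul]
      have h2 : (ψ z1.1 - 1) * ∑ z : Zt q F, ψ z.1 = 0 := by rw [sub_mul, h1, one_mul, sub_self]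
      exact (mul_eq_zero.mp h2).resolve_left (sub_ne_zero.mpr hψ)
    have : Nonempty (Zt q F) := ⟨z0⟩
    obtain ⟨r, hr⟩ := fixed_nat (fun z : Zt q F => ψ z.1 • f (B.U (zz z))) (by
      intro w
      refine ⟨e w, fun z => ?_⟩
      rw [smul_mul_smul_comm, ← fm, ← B.U.map_mul]
      congr 1
      · simp [e, AddChar.map_add_eq_mul]
      · congr 2; apply Pt.ext <;> simp [e])
    simp only [trace_smul, smul_eq_mul] at hr
    rw [hsum (fun z => ψ z.1) (by simp [z0]), hs, mul_zero, add_zero, card_Zt] at hr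
    have h4 : φ = - (r : ℂ) := by
      apply mul_left_cancel₀ hq0; linear_combination e1 - hr
    have h5 : (m : ℂ) = ((q - 1) * r : ℕ) := by
      rw [Nat.cast_mul, Nat.cast_sub (by omega)]; push_cast
      linear_combination hr + h4
    exact ⟨r, by exact_mod_cast h5⟩
  refine Nat.Coprime.mul_dvd_of_dvd_of_dvd ?_ d1 d2
  have := Nat.coprime_self_add_left (m := q - 1) (n := 1)
  rw [Nat.sub_add_cancel (by omega)] at this
  exact this.mpr (by simp)

end Rep

end Paper

end

noncomputable section
open Matrix

namespace Paper

set_option linter.unusedSectionVars false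

section Ex

variable {q : ℕ} {F : Type} [Field F] [Fintype F] [hS : Su q F] [DecidableEq F]
variable {G : Type} [Group G] [Fintype G]

theorem irred_of_zsum (B : BG q F G) (ρ : G →* GL (Fin (q ^ 2 - q)) ℂ)
    (hz : ∑ z : Zt q F, mx ρ (B.U (zz z)) = 0) : IsIrredRep ρ := by
  have h3 := q_ge q F
  have hq : q ^ 2 - q = q * (q - 1) := by rw [Nat.mul_sub, pow_two, mul_one]
  have hpos : 0 < q ^ 2 - q := by rw [hq]; exact Nat.mul_pos (by omega) (by omega)
  refine ⟨hpos, fun W hW => ?_⟩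
  by_cases hb : W = ⊥
  · exact Or.inl hb
  right
  let b := Module.finBasis ℂ W
  let L : G → (W →ₗ[ℂ] W) := fun g => (Matrix.toLin' (mx ρ g)).restrict (fun v hv => by
    rw [Matrix.toLin'_apply]; exact hW g v hv)
  have L1 : L 1 = 1 := by
    ext v i; simp [L, mx_one]
  have Lm : ∀ g h, L (g * h) = L g * L h := by
    intro g h; ext v i; simp [L, mx_mul]
  have Lz : ∑ z : Zt q F, L (B.U (zz z)) = 0 := by
    ext v i
    have := congrFun (congrArg (fun M => M.mulVec v.1) hz) i
    simp only [Matrix.sum_mulVec, Finset.sum_apply, Matrix.zero_mulVec] at this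
    simpa [L, LinearMap.sum_apply] using this
  have hd := dvd_of_zsum B (fun g => LinearMap.toMatrix b b (L g))
    (by simp only [L1]; exact LinearMap.toMatrix_one b)
    (fun g h => by simp only [Lm]; exact LinearMap.toMatrix_mul b _ _)
    (by rw [← map_sum, Lz, map_zero])
  have hp : 0 < Module.finrank ℂ W := by
    rw [Nat.pos_iff_ne_zero]; intro h
    exact hb (Submodule.finrank_eq_zero.mp h)
  have hle := Nat.le_of_dvd hp hd
  apply Submodule.eq_top_of_finrank_eq
  apply le_antisymm (Submodule.finrank_le W)
  rw [Module.finrank_fin_fun]; exact hq.le.trans hle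

open scoped ComplexOrder in
theorem exists_rho (B : BG q F G) : ∃ ρ : G →* GL (Fin (q ^ 2 - q)) ℂ, IsIrredRep ρ ∧
    (∀ g i j, ∃ r : ℚ, ((ρ g : Matrix (Fin (q ^ 2 - q)) (Fin (q ^ 2 - q)) ℂ)) i j = (r : ℂ)) ∧
    FSind (charOf ρ) = 1 := by
  classical
  obtain ⟨f, f1, fm, fz⟩ := exists_rep B
  let c : Matrix (Fin (q ^ 2 - q)) (Fin (q ^ 2 - q)) ℚ →+*
    Matrix (Fin (q ^ 2 - q)) (Fin (q ^ 2 - q)) ℂ := (Rat.castHom ℂ).mapMatrix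
  let ρ : G →* GL (Fin (q ^ 2 - q)) ℂ := MonoidHom.toHomUnits
    { toFun := fun g => c (f g)
      map_one' := by rw [f1, _root_.map_one]
      map_mul' := fun g h => by rw [fm, _root_.map_mul] }
  have hm : ∀ g, mx ρ g = c (f g) := fun g => rfl
  have hi : IsIrredRep ρ := irred_of_zsum B ρ (by
    simp only [hm]; rw [← map_sum, fz, map_zero])
  refine ⟨ρ, hi, fun g i j => ⟨f g i j, rfl⟩, ?_⟩
  have hT : ∀ g, (mx ρ g)ᵀ = (mx ρ g)ᴴ := by
    intro g; ext i j
    rw [hm]; simp [c, Matrix.conjTranspose_apply]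
  let H : Matrix (Fin (q ^ 2 - q)) (Fin (q ^ 2 - q)) ℂ := ∑ g, (mx ρ g)ᵀ * mx ρ g
  have hH : H.PosDef := by
    have : H = 1 + ∑ g ∈ Finset.univ.erase (1 : G), (mx ρ g)ᴴ * mx ρ g := by
      simp only [H, hT]
      rw [← Finset.add_sum_erase Finset.univ _ (Finset.mem_univ (1 : G)), mx_one]
      simp
    rw [this]
    exact Matrix.PosDef.one.add_posSemidef
      (Matrix.posSemidef_sum _ fun g _ => Matrix.posSemidef_conjTranspose_mul_self _)
  refine FS_eq_one hi H ?_ ((Matrix.isUnit_iff_isUnit_det _).mp hH.isUnit) ?_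
  · simp [H, Matrix.transpose_sum, Matrix.transpose_mul]
  · intro g
    simp only [H]
    rw [Matrix.mul_sum, Matrix.sum_mul]
    refine Fintype.sum_equiv (Equiv.mulRight g) _ _ fun h => ?_
    simp only [Equiv.coe_mulRight, mx_mul, Matrix.transpose_mul, Matrix.mul_assoc]

end Ex

end Paper

end

noncomputable section
open Matrix

namespace Paper

set_option linter.unusedSectionVars false

section Disc

variable {q : ℕ} {F : Type} [Field F] [Fintype F] [hS : Su q F] [DecidableEq F]
variable {G : Type} [Group G] [Fintype G]

theorem mem_charField {χ : G → ℂ} (hr : IsRationalChar χ) {x : ℂ} (hx : x ∈ charField χ) :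
    ∃ r : ℚ, x = r := by
  have h : charField χ ≤ (Rat.castHom ℂ).fieldRange := by
    rw [charField, Subfield.closure_le]
    rintro _ ⟨g, rfl⟩
    obtain ⟨r, h⟩ := hr g
    exact ⟨r, by simp [h]⟩
  obtain ⟨r, h⟩ := h hx
  exact ⟨r, by simp [← h]⟩

theorem sign_eq {q : ℕ} (ho : Odd q) :
    (-1 : ℂ) ^ ((q * (q - 1)) * (q * (q - 1) - 1) / 2) = (-1) ^ ((q - 1) / 2) := by
  obtain ⟨k, rfl⟩ := ho
  rw [Nat.add_sub_cancel]
  have h1 : (2 * k + 1) * (2 * k) * ((2 * k + 1) * (2 * k) - 1) / 2 =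
      (2 * k + 1) * k * ((2 * k + 1) * (2 * k) - 1) := by
    apply Nat.div_eq_of_eq_mul_left (by norm_num); ring
  have h2 : 2 * k / 2 = k := by omega
  rw [h1, h2]
  rcases Nat.eq_zero_or_pos k with rfl | hk
  · simp
  have ho : Odd ((2 * k + 1) * (2 * k) - 1) :=
    Nat.Even.sub_odd (Nat.mul_pos (by omega) (by omega)) (by simp) odd_one
  rcases Nat.even_or_odd k with he | he
  · rw [he.neg_one_pow, Even.neg_one_pow]
    exact (he.mul_left _).mul_right _
  · rw [he.neg_one_pow, Odd.neg_one_pow]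
    exact ((odd_two_mul_add_one k).mul he).mul ho

theorem disc (B : BG q F G) {χ : G → ℂ} (hr : IsRationalChar χ)
    {ψ : G → ℚ} (hψ : ∀ g, χ g = ψ g) (h : Psi B ψ) :
    HasOrthDisc χ ((-1 : ℂ) ^ ((q - 1) / 2) * (q : ℂ)) := by
  intro n ρ hχ hρ H hHm hu hs hinv
  have h3 := q_ge q F
  have hn : n = q * (q - 1) := by
    have h1 := hψ 1
    rw [hχ, charOf_one, h.one] at h1
    have h2 : (n : ℂ) = ((q * (q - 1) : ℕ) : ℂ) := by
      rw [h1, Nat.cast_mul, Nat.cast_sub (by omega)]; push_cast; ring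
    exact_mod_cast h2
  have e1 : ∀ g, ∃ M : Matrix (Fin n) (Fin n) ℚ, mx ρ g = M.map (Rat.castHom ℂ) := by
    intro g
    choose M hM using fun i j => mem_charField hr (hρ g i j)
    exact ⟨Matrix.of M, by ext i j; simpa [mx] using hM i j⟩
  choose f hf using e1
  obtain ⟨H', hH'⟩ : ∃ M : Matrix (Fin n) (Fin n) ℚ, H = M.map (Rat.castHom ℂ) := by
    choose M hM using fun i j => mem_charField hr (hHm i j)
    exact ⟨Matrix.of M, by ext i j; simpa using hM i j⟩
  have inj : Function.Injective (fun M : Matrix (Fin n) (Fin n) ℚ => M.map (Rat.castHom ℂ)) :=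
    Matrix.map_injective (Rat.castHom ℂ).injective
  have hdet : H.det = (H'.det : ℚ) := by
    rw [hH']
    have := (Rat.castHom ℂ).map_det H'
    simpa using this.symm
  let A : AddSubgroup F :=
    { carrier := {z | sg q z = -z}
      zero_mem' := by simp
      add_mem' := fun {a b} ha hb => by
        simp only [Set.mem_ofPred_eq] at *; rw [map_add, ha, hb]; ring
      neg_mem' := fun {a} ha => by
        simp only [Set.mem_ofPred_eq] at *; rw [map_neg, ha] }
  let _ : Fintype A := (inferInstance : Fintype (Zt q F))
  have hA : Fintype.card A = q := card_Zt q (F := F)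
  let ζ : A → Zt q F := fun a => ⟨a.1, a.2⟩
  obtain ⟨r, hr0, hr1⟩ := disc_abs (A := A) (by rw [hA]; exact hS.odd) (m := q) hS.odd
    (by rw [hA]; exact hn) (fun a => f (B.U (zz (ζ a)))) (by
      apply inj
      simp only
      rw [← hf]
      have : (zz (ζ 0) : Pt q F) = 1 := by apply Pt.ext <;> simp [ζ]
      rw [this, _root_.map_one, mx_one]; simp) (by
      intro x y
      apply inj
      simp only
      rw [Matrix.map_mul, ← hf, ← hf, ← hf, ← mx_mul, ← B.U.map_mul]
      congr 2
      apply Pt.ext <;> simp [ζ]) (by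
      intro z hz
      have h1 := h.val_z (ζ z) (fun h => hz (Subtype.ext h))
      have h2 := hψ (B.U (zz (ζ z)))
      rw [hχ, charOf_apply, hf, h1] at h2
      have h4 : (((f (B.U (zz (ζ z)))).trace : ℚ) : ℂ) = ((-q : ℚ) : ℂ) := by
        rw [← h2]; simp [Matrix.trace]
      exact_mod_cast h4) H' (by
      apply inj
      simp only
      rw [Matrix.transpose_map, ← hH', hs]) (by
      intro h0
      rw [hdet, h0] at hu; simp at hu) (by
      intro z
      apply inj
      simp only
      rw [Matrix.map_mul, Matrix.map_mul, Matrix.transpose_map, ← hf, ← hH']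
      exact hinv _)
  refine ⟨r, ?_, by exact_mod_cast hr0, ?_⟩
  · exact SubfieldClass.ratCast_mem _ r
  · rw [hdet, hr1, hn, sign_eq hS.odd, hA]; push_cast; ring

end Disc

section Main

theorem main11 (p k q : ℕ) (hp : p.Prime) (hpodd : Odd p) (hk : 0 < k) (hq : q = p ^ k)
    (F : Type) [Field F] [Fintype F] [ExpChar F p] (hF : Fintype.card F = q ^ 2) :
    (∃! ϑ : ↥(Borel p k F) → ℂ, IsIrrChar ϑ ∧ IsRationalChar ϑ ∧
      ϑ 1 = ((q ^ 2 - q : ℕ) : ℂ) ∧ FSind ϑ = 1) ∧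
    ∀ ϑ : ↥(Borel p k F) → ℂ, IsIrrChar ϑ → IsRationalChar ϑ →
      ϑ 1 = ((q ^ 2 - q : ℕ) : ℂ) → FSind ϑ = 1 →
      RealizableOverQ ϑ ∧ HasOrthDisc ϑ ((-1 : ℂ) ^ ((q - 1) / 2) * (q : ℂ)) := by
  classical
  have : Su q F :=
    { add_pow := fun x y => by rw [hq]; exact add_pow_expChar_pow x y p k
      odd := by rw [hq]; exact hpodd.pow
      one_lt := by rw [hq]; exact Nat.one_lt_pow (by omega) hp.one_lt
      card := hF }
  let B : BG q F (Borel p k F) := borelBG hq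
  let _ : Fintype (Borel p k F) := Fintype.ofFinite _
  have key : ∀ ϑ : ↥(Borel p k F) → ℂ, IsIrrChar ϑ → IsRationalChar ϑ →
      ϑ 1 = ((q ^ 2 - q : ℕ) : ℂ) → FSind ϑ = 1 → ∃ ψ : ↥(Borel p k F) → ℚ,
        (∀ g, ϑ g = ψ g) ∧ Psi B ψ := by
    rintro _ ⟨n, ρ, hρ, rfl⟩ h1 h2 h3
    exact psi_of B hρ h1 h2 h3
  have uniq : ∀ ϑ ϑ' : ↥(Borel p k F) → ℂ, IsIrrChar ϑ → IsRationalChar ϑ →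
      ϑ 1 = ((q ^ 2 - q : ℕ) : ℂ) → FSind ϑ = 1 → IsIrrChar ϑ' → IsRationalChar ϑ' →
      ϑ' 1 = ((q ^ 2 - q : ℕ) : ℂ) → FSind ϑ' = 1 → ϑ = ϑ' := by
    intro ϑ ϑ' a1 a2 a3 a4 b1 b2 b3 b4
    obtain ⟨ψ, h1, h2⟩ := key ϑ a1 a2 a3 a4
    obtain ⟨ψ', h1', h2'⟩ := key ϑ' b1 b2 b3 b4
    funext g
    rw [h1, h1', h2.unique h2']
  obtain ⟨ρ, hi, hrat, hfs⟩ := exists_rho B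
  have c1 : IsIrrChar (charOf ρ) := ⟨_, ρ, hi, rfl⟩
  have c2 : IsRationalChar (charOf ρ) := by
    intro g
    choose M hM using hrat g
    exact ⟨∑ i, M i i, by
      rw [charOf_apply, Matrix.trace, Rat.cast_sum]
      exact Finset.sum_congr rfl fun i _ => hM i i⟩
  have c3 : charOf ρ 1 = ((q ^ 2 - q : ℕ) : ℂ) := charOf_one ρ
  refine ⟨⟨charOf ρ, ⟨c1, c2, c3, hfs⟩, ?_⟩, ?_⟩
  · rintro ϑ ⟨a1, a2, a3, a4⟩
    exact uniq _ _ a1 a2 a3 a4 c1 c2 c3 hfs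
  · intro ϑ a1 a2 a3 a4
    refine ⟨⟨_, ρ, uniq _ _ a1 a2 a3 a4 c1 c2 c3 hfs, hrat⟩, ?_⟩
    obtain ⟨ψ, h1, h2⟩ := key ϑ a1 a2 a3 a4
    exact disc B a2 h1 h2

end Main

end Paper

end

namespace Paper

/-- the Borel subgroup of `SU₃(q)`, `q` odd, has exactly one rational
irreducible character `ϑ` of degree `q²-q` with Frobenius–Schur indicator `+1`;
it is realizable over `ℚ` and has orthogonal discriminant `(-1)^((q-1)/2)·q`. -/
theorem stmt11 (p k q : ℕ) (hp : p.Prime) (hpodd : Odd p) (hk : 0 < k) (hq : q = p ^ k)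
    (F : Type) [Field F] [Fintype F] [ExpChar F p] (hF : Fintype.card F = q ^ 2) :
    (∃! ϑ : ↥(Borel p k F) → ℂ, IsIrrChar ϑ ∧ IsRationalChar ϑ ∧
      ϑ 1 = ((q ^ 2 - q : ℕ) : ℂ) ∧ FSind ϑ = 1) ∧
    ∀ ϑ : ↥(Borel p k F) → ℂ, IsIrrChar ϑ → IsRationalChar ϑ →
      ϑ 1 = ((q ^ 2 - q : ℕ) : ℂ) → FSind ϑ = 1 →
      RealizableOverQ ϑ ∧ HasOrthDisc ϑ ((-1 : ℂ) ^ ((q - 1) / 2) * (q : ℂ)) := by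
  exact main11 p k q hp hpodd hk hq F hF

end Paper
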